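/- Let J : ℝ → [0,∞) be a strictly convex function with J(0) = 0, and let g ∈ L¹(ℝⁿ) be nonnegative with g(x) = g₀(|x|) for a strictly decreasing function g₀ on (0,∞) (in particular g = g^{*n}). Let u, v : ℝⁿ → [0,∞) be nonnegative measurable functions such that |{u > τ}| < ∞ and |{v > τ}| < ∞ for all τ > 0 and such that ∫_{ℝⁿ}∫_{ℝⁿ} J(u(x) − v(y)) g(x−y) dx dy is finite. Then equality ∫∫ J(u^{*n}(x) − v^{*n}(y)) g(x−y) dx dy = ∫∫ J(u(x) − v(y)) g(x−y) dx dy holds if and only if one of the following holds: (i) u = 0 almost everywhere or v = 0 almost everywhere; (ii) there exists a ∈ ℝⁿ such that u(x) = u^{*n}(x−a) for a.e. x ∈ ℝⁿ and v(y) = v^{*n}(y−a) for a.e. y ∈ ℝⁿ. -/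

import Mathlib

open MeasureTheory Real

/-- For a measurable set `A ⊂ ℝⁿ` of finite Lebesgue measure, the radius of the open ball
centered at the origin with the same measure as `A`. -/
noncomputable def schwarzRadius (n : ℕ) (A : Set (EuclideanSpace ℝ (Fin n))) : ℝ :=
  ((volume A).toReal / (volume (Metric.ball (0 : EuclideanSpace ℝ (Fin n)) 1)).toReal) ^
    ((n : ℝ)⁻¹)

/-- `A^{*n}`: the open ball in `ℝⁿ` centered at the origin with the same measure as `A`. -/
noncomputable def schwarzSet (n : ℕ) (A : Set (EuclideanSpace ℝ (Fin n))) :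
    Set (EuclideanSpace ℝ (Fin n)) :=
  Metric.ball 0 (schwarzRadius n A)

/-- The Schwarz rearrangement `u^{*n}(x) := ∫₀^∞ χ_{{|u|>t}^{*n}}(x) dt`. -/
noncomputable def schwarzRearr (n : ℕ) (u : EuclideanSpace ℝ (Fin n) → ℝ) :
    EuclideanSpace ℝ (Fin n) → ℝ := fun x =>
  ∫ t in Set.Ioi (0 : ℝ), (schwarzSet n {y | t < |u y|}).indicator (fun _ => (1 : ℝ)) x

/-! Reflecting in a hyperplane groups the interactions of two points and their mirror images. A
polarization, which moves the larger of the two values of each function to a fixed side of the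
hyperplane, changes such a group by a kernel difference times a mixed second difference of `J`;
convexity gives this a sign, so polarizing both functions does not increase the energy.

For continuous compactly supported functions, minimize the second moment over all pairs which are
equimeasurable with the given one, inherit its bounds and do not have larger energy. A minimizer is
not improved by any polarization, hence radial, and so it is the pair of rearrangements. The
inequality for general functions follows by truncation and approximation in measure.

In the case of equality no polarization can decrease the energy. Strict convexity then forces, for
every hyperplane, all superlevel sets of `u` and of `v` to be concentrated on a common side. The
maximum points of the potential of a superlevel set with respect to a strictly decreasing kernel are
therefore unique and common to all the superlevel sets, and at density points this common centre
makes every superlevel set a ball around it.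
-/

namespace Rearrangement

open Filter Topology Set
open scoped ENNReal InnerProductSpace

section HalfSpace

variable {E : Type*} [NormedAddCommGroup E] [InnerProductSpace ℝ E]

/-- A closed half-space `{x | offset ≤ ⟪normal, x⟫}`, kept as its inner unit normal and offset so
that reflection in the boundary hyperplane and polarization are explicit functions of the data. -/
structure HalfSpace (E : Type*) [NormedAddCommGroup E] [InnerProductSpace ℝ E] where
  normal : E
  offset : ℝ
  norm_normal : ‖normal‖ = 1

namespace HalfSpace

variable (H : HalfSpace E)

/-- The signed distance to the boundary hyperplane, positive inside the half-space. -/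
noncomputable def height (x : E) : ℝ := ⟪H.normal, x⟫_ℝ - H.offset

/-- The reflection in the boundary hyperplane. -/
noncomputable def reflect (x : E) : E := x - (2 * H.height x) • H.normal

/-- The complementary half-space. -/
def opp : HalfSpace E := ⟨-H.normal, -H.offset, by rw [norm_neg, H.norm_normal]⟩

/-- The polarization (two-point rearrangement) of `u`: of the two values at a pair of mirror
points, the larger one is placed in `H`. -/
noncomputable def polarize (u : E → ℝ) (x : E) : ℝ :=
  if 0 ≤ H.height x then max (u x) (u (H.reflect x)) else min (u x) (u (H.reflect x))

lemma height_opp (x : E) : H.opp.height x = -H.height x := by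
  simp only [height, opp, inner_neg_left]
  ring

lemma reflect_opp (x : E) : H.opp.reflect x = H.reflect x := by
  simp only [reflect, height_opp]
  simp only [opp]
  module

lemma opp_opp : H.opp.opp = H := by
  simp [opp]

lemma height_reflect (x : E) : H.height (H.reflect x) = -H.height x := by
  have hnormal : ⟪H.normal, H.normal⟫_ℝ = 1 := by
    rw [real_inner_self_eq_norm_sq, H.norm_normal, one_pow]
  simp only [reflect, height, inner_sub_right, inner_smul_right, hnormal]
  ring

@[simp]
lemma reflect_reflect (x : E) : H.reflect (H.reflect x) = x := by
  rw [reflect, height_reflect, reflect]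
  module

lemma reflect_eq_self {x : E} (hx : H.height x = 0) : H.reflect x = x := by
  simp [reflect, hx]

lemma norm_sub_reflect_sq (x y : E) :
    ‖x - H.reflect y‖ ^ 2 = ‖x - y‖ ^ 2 + 4 * (H.height x * H.height y) := by
  have hsub : x - H.reflect y = (x - y) + (2 * H.height y) • H.normal := by
    rw [reflect]
    module
  rw [hsub, norm_add_sq_real, norm_smul, H.norm_normal, inner_smul_right, real_inner_comm]
  simp only [inner_sub_right, mul_one, norm_eq_abs, sq_abs]
  simp only [height]
  ring

lemma norm_reflect_sub_reflect (x y : E) : ‖H.reflect x - H.reflect y‖ = ‖x - y‖ := by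
  have hx := H.norm_sub_reflect_sq (H.reflect x) y
  have hy := H.norm_sub_reflect_sq y x
  rw [height_reflect, norm_sub_rev (H.reflect x) y, hy, norm_sub_rev y x] at hx
  exact (sq_eq_sq₀ (norm_nonneg _) (norm_nonneg _)).1 (hx.trans (by ring))

lemma norm_reflect_sub (x y : E) : ‖H.reflect x - y‖ = ‖x - H.reflect y‖ := by
  rw [← H.norm_reflect_sub_reflect x, reflect_reflect]

lemma norm_reflect_sq (x : E) : ‖H.reflect x‖ ^ 2 = ‖x‖ ^ 2 + 4 * (H.height 0 * H.height x) := by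
  simpa using H.norm_sub_reflect_sq 0 x

lemma norm_sub_lt_norm_sub_reflect_iff {x y : E} :
    ‖x - y‖ < ‖x - H.reflect y‖ ↔ 0 < H.height x * H.height y := by
  rw [← sq_lt_sq₀ (norm_nonneg _) (norm_nonneg _), norm_sub_reflect_sq]
  constructor <;> intro h <;> linarith

lemma norm_sub_le_norm_sub_reflect_iff {x y : E} :
    ‖x - y‖ ≤ ‖x - H.reflect y‖ ↔ 0 ≤ H.height x * H.height y := by
  rw [← sq_le_sq₀ (norm_nonneg _) (norm_nonneg _), norm_sub_reflect_sq]
  constructor <;> intro h <;> linarith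

lemma norm_sub_reflect_lt_norm_sub_iff {x y : E} :
    ‖x - H.reflect y‖ < ‖x - y‖ ↔ H.height x * H.height y < 0 := by
  rw [← not_le, norm_sub_le_norm_sub_reflect_iff, not_le]

lemma norm_sub_reflect_le_norm_sub_iff {x y : E} :
    ‖x - H.reflect y‖ ≤ ‖x - y‖ ↔ H.height x * H.height y ≤ 0 := by
  rw [← not_lt, norm_sub_lt_norm_sub_reflect_iff, not_lt]

@[fun_prop]
lemma continuous_height : Continuous H.height := by
  unfold height
  fun_prop

@[fun_prop]
lemma continuous_reflect : Continuous H.reflect := by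
  unfold reflect
  fun_prop

lemma exists_reflect_eq {x y : E} (hxy : x ≠ y) :
    ∃ H : HalfSpace E, H.reflect x = y ∧ 0 < H.height x := by
  have hpos : 0 < ‖x - y‖ := norm_pos_iff.2 (sub_ne_zero.2 hxy)
  let e : E := ‖x - y‖⁻¹ • (x - y)
  have he : ‖e‖ = 1 := by rw [norm_smul, norm_inv, norm_norm, inv_mul_cancel₀ hpos.ne']
  let H : HalfSpace E := ⟨e, ⟪e, x⟫_ℝ - ‖x - y‖ / 2, he⟩
  have hheight : H.height x = ‖x - y‖ / 2 := by
    simp only [height, H]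
    ring
  refine ⟨H, ?_, by linarith⟩
  have hcoeff : 2 * (‖x - y‖ / 2) * ‖x - y‖⁻¹ = 1 := by field_simp
  rw [reflect, hheight, smul_smul, hcoeff, one_smul, sub_sub_cancel]

lemma le_of_norm_sub_lt_of_reflect_le {α : Type*} [LE α] {w : E → α} {a : E}
    (hw : ∀ H : HalfSpace E, 0 < H.height a → ∀ x, 0 < H.height x → w (H.reflect x) ≤ w x)
    {x y : E} (hxy : ‖x - a‖ < ‖y - a‖) : w y ≤ w x := by
  obtain ⟨H, rfl, hx⟩ := exists_reflect_eq (x := x) (y := y) (by rintro rfl; exact hxy.false)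
  rw [norm_reflect_sub, norm_sub_lt_norm_sub_reflect_iff] at hxy
  exact hw H ((pos_iff_pos_of_mul_pos hxy).1 hx) x hx

lemma polarize_cases (u : E → ℝ) (x : E) :
    (H.polarize u x = u x ∧ H.polarize u (H.reflect x) = u (H.reflect x) ∧
      0 ≤ H.height x * (u x - u (H.reflect x))) ∨
    (H.polarize u x = u (H.reflect x) ∧ H.polarize u (H.reflect x) = u x ∧
      H.height x * (u x - u (H.reflect x)) ≤ 0) := by
  unfold polarize
  rw [reflect_reflect, height_reflect]
  rcases lt_trichotomy (H.height x) 0 with hx | hx | hx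
  · rw [if_neg hx.not_ge, if_pos (by linarith)]
    rcases le_total (u x) (u (H.reflect x)) with hle | hle
    · exact .inl ⟨min_eq_left hle, max_eq_left hle, by nlinarith⟩
    · exact .inr ⟨min_eq_right hle, max_eq_right hle, by nlinarith⟩
  · rw [H.reflect_eq_self hx]
    simp [hx]
  · rw [if_pos hx.le, if_neg (by linarith)]
    rcases le_total (u x) (u (H.reflect x)) with hle | hle
    · exact .inr ⟨max_eq_right hle, min_eq_right hle, by nlinarith⟩
    · exact .inl ⟨max_eq_left hle, min_eq_left hle, by nlinarith⟩

lemma polarize_eq_or (u : E → ℝ) (x : E) :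
    H.polarize u x = u x ∨ H.polarize u x = u (H.reflect x) :=
  (H.polarize_cases u x).imp And.left And.left

lemma polarize_nonneg {u : E → ℝ} (hu : ∀ x, 0 ≤ u x) (x : E) : 0 ≤ H.polarize u x := by
  rcases H.polarize_eq_or u x with h | h <;> rw [h] <;> exact hu _

lemma polarize_eq_zero_of_lt_norm (hH : 0 ≤ H.height 0) {u : E → ℝ} (hu : ∀ x, 0 ≤ u x) {R : ℝ}
    (hR : ∀ x, R < ‖x‖ → u x = 0) {x : E} (hx : R < ‖x‖) : H.polarize u x = 0 := by
  rw [polarize, hR x hx]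
  split_ifs with hheight
  · have hle : ‖0 - x‖ ≤ ‖0 - H.reflect x‖ :=
      H.norm_sub_le_norm_sub_reflect_iff.2 (mul_nonneg hH hheight)
    simp only [zero_sub, norm_neg] at hle
    rw [hR _ (hx.trans_le hle), max_self]
  · exact min_eq_left (hu _)

lemma abs_polarize_sub_le {u : E → ℝ} {ε δ : ℝ} (hu : ∀ x y, ‖x - y‖ < δ → |u x - u y| ≤ ε)
    {x y : E} (hxy : ‖x - y‖ < δ) : |H.polarize u x - H.polarize u y| ≤ ε := by
  have hstraight := hu x y hxy
  have hmirror := hu (H.reflect x) (H.reflect y) (by rwa [norm_reflect_sub_reflect])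
  have hcross (h : H.height x * H.height y ≤ 0) :
      |u x - u (H.reflect y)| ≤ ε ∧ |u (H.reflect x) - u y| ≤ ε := by
    have hle := H.norm_sub_reflect_le_norm_sub_iff.2 h
    exact ⟨hu _ _ (hle.trans_lt hxy), hu _ _ (by rw [norm_reflect_sub]; exact hle.trans_lt hxy)⟩
  have hmax := (abs_max_sub_max_le_max (u x) (u (H.reflect x)) (u y) (u (H.reflect y))).trans
    (max_le hstraight hmirror)
  have hmin := (abs_min_sub_min_le_max (u x) (u (H.reflect x)) (u y) (u (H.reflect y))).trans
    (max_le hstraight hmirror)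
  unfold polarize
  split_ifs with hx hy hy
  · exact hmax
  · obtain ⟨hxy', hyx'⟩ := hcross (by nlinarith)
    grind
  · obtain ⟨hxy', hyx'⟩ := hcross (by nlinarith)
    grind
  · exact hmin

section Measure

variable [MeasurableSpace E] [BorelSpace E]

@[fun_prop]
lemma measurable_polarize {u : E → ℝ} (hu : Measurable u) : Measurable (H.polarize u) := by
  have hreflect := hu.comp H.continuous_reflect.measurable
  exact (hu.max hreflect).ite (measurableSet_le measurable_const H.continuous_height.measurable)
    (hu.min hreflect)

variable [FiniteDimensional ℝ E]

lemma measurePreserving_reflect : MeasurePreserving H.reflect (volume : Measure E) volume := by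
  have hcomp : H.reflect =
      (fun x => x + (2 * H.offset) • H.normal) ∘ (ℝ ∙ H.normal)ᗮ.reflection := by
    funext x
    rw [Function.comp_apply, Submodule.reflection_orthogonal_apply,
      Submodule.reflection_singleton_apply, H.norm_normal]
    simp only [reflect, height, RCLike.ofReal_real_eq_id, id, one_pow, div_one]
    module
  rw [hcomp]
  exact (measurePreserving_add_right volume _).comp (LinearIsometryEquiv.measurePreserving _)

lemma volume_lt_polarize {u : E → ℝ} (hu : Measurable u) (t : ℝ) :
    volume {x | t < H.polarize u x} = volume {x | t < u x} := by
  have hpairs (w : E → ℝ) (hw : Measurable w) : 2 * volume {x | t < w x} =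
      ∫⁻ x, (({x | t < w x}.indicator 1 x : ℝ≥0∞) +
        {x | t < w x}.indicator 1 (H.reflect x)) := by
    have hlevel : MeasurableSet {x | t < w x} := measurableSet_lt measurable_const hw
    have hind : Measurable ({x | t < w x}.indicator (1 : E → ℝ≥0∞)) :=
      measurable_one.indicator hlevel
    rw [lintegral_add_left hind, H.measurePreserving_reflect.lintegral_comp hind,
      lintegral_indicator_one hlevel, two_mul]
  have hdouble : 2 * volume {x | t < H.polarize u x} = 2 * volume {x | t < u x} := by
    rw [hpairs _ (H.measurable_polarize hu), hpairs _ hu]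
    refine lintegral_congr fun x => ?_
    rcases H.polarize_cases u x with ⟨hx, hx', -⟩ | ⟨hx, hx', -⟩
    · simp only [indicator, mem_ofPred_eq, hx, hx']
    · simp only [indicator, mem_ofPred_eq, hx, hx', Pi.one_apply]
      rw [add_comm]
  exact (ENNReal.mul_right_inj (by norm_num) (by norm_num)).1 hdouble

end Measure

end HalfSpace

end HalfSpace

section MixedDifference

variable {J : ℝ → ℝ}

/-- The second difference of `(a, b) ↦ J (a - b)`, which measures what polarizing exactly one of
two functions does to the energy of a quadruple of mirror points. -/
def mixedDiff (J : ℝ → ℝ) (a a' b b' : ℝ) : ℝ :=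
  J (a - b) + J (a' - b') - (J (a - b') + J (a' - b))

lemma mixedDiff_swap_left (J : ℝ → ℝ) (a a' b b' : ℝ) :
    mixedDiff J a' a b b' = -mixedDiff J a a' b b' := by
  unfold mixedDiff
  ring

lemma mixedDiff_swap (J : ℝ → ℝ) (a a' b b' : ℝ) :
    mixedDiff J a' a b' b = mixedDiff J a a' b b' := by
  unfold mixedDiff
  ring

lemma mixedDiff_nonneg (hJ : ConvexOn ℝ univ J) {a a' b b' : ℝ} (h : (a - a') * (b - b') ≤ 0) :
    0 ≤ mixedDiff J a a' b b' := by
  wlog ha : a' ≤ a ∧ b ≤ b' generalizing a a' b b'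
  · rw [← mixedDiff_swap]
    refine this (by linarith) ?_
    rcases mul_nonpos_iff.1 h with ⟨_, _⟩ | ⟨_, _⟩ <;> grind
  have hmem : a - b' ∈ segment ℝ (a' - b') (a - b) := by
    rw [segment_eq_Icc (by linarith)]
    constructor <;> linarith
  obtain ⟨s, t, hs, ht, hst, hcomb⟩ := hmem
  have hcomb' : t • (a' - b') + s • (a - b) = a' - b := by
    simp only [smul_eq_mul] at hcomb ⊢
    linear_combination (a' - b' + (a - b)) * hst - hcomb
  have h₁ := hJ.2 (mem_univ (a' - b')) (mem_univ (a - b)) hs ht hst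
  have h₂ := hJ.2 (mem_univ (a' - b')) (mem_univ (a - b)) ht hs (by linarith)
  rw [hcomb] at h₁
  rw [hcomb'] at h₂
  simp only [smul_eq_mul] at h₁ h₂
  unfold mixedDiff
  linear_combination h₁ + h₂ + (J (a' - b') + J (a - b)) * hst

lemma mixedDiff_pos (hJ : StrictConvexOn ℝ univ J) {a a' b b' : ℝ}
    (h : (a - a') * (b - b') < 0) : 0 < mixedDiff J a a' b b' := by
  wlog ha : a' < a ∧ b < b' generalizing a a' b b'
  · rw [← mixedDiff_swap]
    refine this (by linarith) ?_
    rcases mul_neg_iff.1 h with ⟨_, _⟩ | ⟨_, _⟩ <;> grind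
  have hmem : a - b' ∈ openSegment ℝ (a' - b') (a - b) := by
    rw [openSegment_eq_Ioo (by linarith)]
    constructor <;> linarith
  obtain ⟨s, t, hs, ht, hst, hcomb⟩ := hmem
  have hcomb' : t • (a' - b') + s • (a - b) = a' - b := by
    simp only [smul_eq_mul] at hcomb ⊢
    linear_combination (a' - b' + (a - b)) * hst - hcomb
  have hne : a' - b' ≠ a - b := by linarith
  have h₁ := hJ.2 (mem_univ (a' - b')) (mem_univ (a - b)) hne hs ht hst
  have h₂ := hJ.2 (mem_univ (a' - b')) (mem_univ (a - b)) hne ht hs (by linarith)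
  rw [hcomb] at h₁
  rw [hcomb'] at h₂
  simp only [smul_eq_mul] at h₁ h₂
  unfold mixedDiff
  linear_combination h₁ + h₂ + (J (a' - b') + J (a - b)) * hst

end MixedDifference

section Energy

/-- A convex cost function, normalized to have minimum value `0` at `0`. -/
structure IsConvexCost (J : ℝ → ℝ) : Prop where
  convexOn : ConvexOn ℝ univ J
  nonneg : ∀ t, 0 ≤ J t
  map_zero : J 0 = 0

lemma IsConvexCost.continuous {J : ℝ → ℝ} (hJ : IsConvexCost J) : Continuous J :=
  hJ.convexOn.locallyLipschitz.continuous

/-- A nonnegative radially nonincreasing interaction kernel; its value at the origin is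
irrelevant. -/
structure IsRadialKernel {E : Type*} [NormedAddCommGroup E] [MeasurableSpace E] (g : E → ℝ) :
    Prop where
  nonneg : ∀ x, 0 ≤ g x
  measurable : Measurable g
  le_of_norm_le : ∀ x y, x ≠ 0 → ‖x‖ ≤ ‖y‖ → g y ≤ g x

lemma IsRadialKernel.eq_of_norm_eq {E : Type*} [NormedAddCommGroup E] [MeasurableSpace E]
    {g : E → ℝ} (hg : IsRadialKernel g) {x y : E} (hxy : ‖x‖ = ‖y‖) : g x = g y := by
  rcases eq_or_ne x 0 with rfl | hx
  · rw [norm_zero] at hxy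
    rw [norm_eq_zero.1 hxy.symm]
  · have hy : y ≠ 0 := norm_ne_zero_iff.1 (hxy ▸ norm_ne_zero_iff.2 hx)
    exact le_antisymm (hg.le_of_norm_le y x hy hxy.ge) (hg.le_of_norm_le x y hx hxy.le)

/-- The interaction energy `∬ J (u x - v y) g (x - y) dx dy`. -/
noncomputable def energy {E : Type*} [Sub E] [MeasureSpace E] (J : ℝ → ℝ) (g u v : E → ℝ) :
    ℝ≥0∞ :=
  ∫⁻ x, ∫⁻ y, ENNReal.ofReal (J (u x - v y) * g (x - y))

variable {E : Type*} [NormedAddCommGroup E] [InnerProductSpace ℝ E]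

/-- The energy density `J (u x - v y) g (x - y)` summed over the four pairs formed by `x` or its
mirror image and `y` or its mirror image, for a radial kernel `g`. -/
noncomputable def reflectSum (J : ℝ → ℝ) (g : E → ℝ) (H : HalfSpace E) (u v : E → ℝ)
    (p : E × E) : ℝ :=
  g (p.1 - p.2) * (J (u p.1 - v p.2) + J (u (H.reflect p.1) - v (H.reflect p.2))) +
    g (p.1 - H.reflect p.2) * (J (u p.1 - v (H.reflect p.2)) + J (u (H.reflect p.1) - v p.2))

variable {J : ℝ → ℝ} {g u v : E → ℝ}

lemma reflectSum_polarize (J : ℝ → ℝ) (g : E → ℝ) (H : HalfSpace E) (u v : E → ℝ) (x y : E) :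
    (0 ≤ (H.height x * H.height y) *
        ((u x - u (H.reflect x)) * (v y - v (H.reflect y))) ∧
      reflectSum J g H u v (x, y) - reflectSum J g H (H.polarize u) (H.polarize v) (x, y) = 0) ∨
    ((H.height x * H.height y) * ((u x - u (H.reflect x)) * (v y - v (H.reflect y))) ≤ 0 ∧
      reflectSum J g H u v (x, y) - reflectSum J g H (H.polarize u) (H.polarize v) (x, y) =
        (g (x - y) - g (x - H.reflect y)) *
          mixedDiff J (u x) (u (H.reflect x)) (v y) (v (H.reflect y))) := by
  unfold reflectSum mixedDiff
  rcases H.polarize_cases u x with ⟨hu, hu', hsu⟩ | ⟨hu, hu', hsu⟩ <;>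
    rcases H.polarize_cases v y with ⟨hv, hv', hsv⟩ | ⟨hv, hv', hsv⟩ <;>
    simp only [hu, hu', hv, hv']
  · exact .inl ⟨by linarith [mul_nonneg hsu hsv], by ring⟩
  · exact .inr ⟨by linarith [mul_nonpos_of_nonneg_of_nonpos hsu hsv], by ring⟩
  · exact .inr ⟨by linarith [mul_nonpos_of_nonpos_of_nonneg hsu hsv], by ring⟩
  · exact .inl ⟨by linarith [mul_nonneg_of_nonpos_of_nonpos hsu hsv], by ring⟩

lemma kernelDiff_mul_mixedDiff_pos (hJ : StrictConvexOn ℝ univ J)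
    (hg : ∀ x y, x ≠ 0 → ‖x‖ < ‖y‖ → g y < g x)
    (H : HalfSpace E) {x y : E} (hxy : x ≠ y) (hxy' : x ≠ H.reflect y) {a a' b b' : ℝ}
    (h : (H.height x * H.height y) * ((a - a') * (b - b')) < 0) :
    0 < (g (x - y) - g (x - H.reflect y)) * mixedDiff J a a' b b' := by
  rcases mul_neg_iff.1 h with ⟨hh, hab⟩ | ⟨hh, hab⟩
  · have hlt := hg _ _ (sub_ne_zero.2 hxy) (H.norm_sub_lt_norm_sub_reflect_iff.2 hh)
    exact mul_pos (sub_pos.2 hlt) (mixedDiff_pos hJ hab)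
  · have hlt := hg _ _ (sub_ne_zero.2 hxy') (H.norm_sub_reflect_lt_norm_sub_iff.2 hh)
    have hmixed := mixedDiff_pos hJ (a := a') (a' := a) (b := b) (b' := b') (by linarith)
    rw [mixedDiff_swap_left] at hmixed
    exact mul_pos_of_neg_of_neg (sub_neg.2 hlt) (neg_pos.1 hmixed)

lemma nonneg_of_reflectSum_le_polarize (hJ : StrictConvexOn ℝ univ J)
    (hg : ∀ x y, x ≠ 0 → ‖x‖ < ‖y‖ → g y < g x) (H : HalfSpace E)
    {p : E × E} (hp : p.1 ≠ p.2 ∧ p.1 ≠ H.reflect p.2)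
    (h : reflectSum J g H u v p ≤ reflectSum J g H (H.polarize u) (H.polarize v) p) :
    0 ≤ (H.height p.1 * H.height p.2) *
      ((u p.1 - u (H.reflect p.1)) * (v p.2 - v (H.reflect p.2))) := by
  by_contra! hneg
  rcases reflectSum_polarize J g H u v p.1 p.2 with ⟨hsign, -⟩ | ⟨-, heq⟩
  · exact hneg.not_ge hsign
  · have hpos := kernelDiff_mul_mixedDiff_pos hJ hg H hp.1 hp.2 hneg
    rw [← heq] at hpos
    linarith

lemma reflectSum_nonneg (hJ : ∀ t, 0 ≤ J t) (hg : ∀ x, 0 ≤ g x) (H : HalfSpace E) (p : E × E) :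
    0 ≤ reflectSum J g H u v p :=
  add_nonneg (mul_nonneg (hg _) (add_nonneg (hJ _) (hJ _)))
    (mul_nonneg (hg _) (add_nonneg (hJ _) (hJ _)))

variable [MeasurableSpace E]

lemma kernelDiff_mul_mixedDiff_nonneg (hJ : ConvexOn ℝ univ J) (hg : IsRadialKernel g)
    (H : HalfSpace E) {x y : E} (hxy : x ≠ y) (hxy' : x ≠ H.reflect y) {a a' b b' : ℝ}
    (h : (H.height x * H.height y) * ((a - a') * (b - b')) ≤ 0) :
    0 ≤ (g (x - y) - g (x - H.reflect y)) * mixedDiff J a a' b b' := by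
  rcases lt_trichotomy (H.height x * H.height y) 0 with hh | hh | hh
  · have hle := hg.le_of_norm_le _ _ (sub_ne_zero.2 hxy')
      (H.norm_sub_reflect_le_norm_sub_iff.2 hh.le)
    have hmixed := mixedDiff_nonneg hJ (a := a') (a' := a) (b := b) (b' := b') (by nlinarith)
    rw [mixedDiff_swap_left] at hmixed
    exact mul_nonneg_of_nonpos_of_nonpos (sub_nonpos.2 hle) (neg_nonneg.1 hmixed)
  · have heq : ‖x - y‖ = ‖x - H.reflect y‖ :=
      le_antisymm (H.norm_sub_le_norm_sub_reflect_iff.2 hh.ge)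
        (H.norm_sub_reflect_le_norm_sub_iff.2 hh.le)
    rw [hg.eq_of_norm_eq heq, sub_self, zero_mul]
  · have hle := hg.le_of_norm_le _ _ (sub_ne_zero.2 hxy)
      (H.norm_sub_le_norm_sub_reflect_iff.2 hh.le)
    exact mul_nonneg (sub_nonneg.2 hle) (mixedDiff_nonneg hJ (by nlinarith))

lemma reflectSum_polarize_le (hJ : ConvexOn ℝ univ J) (hg : IsRadialKernel g) (H : HalfSpace E)
    {p : E × E} (hp : p.1 ≠ p.2 ∧ p.1 ≠ H.reflect p.2) :
    reflectSum J g H (H.polarize u) (H.polarize v) p ≤ reflectSum J g H u v p := by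
  rcases reflectSum_polarize J g H u v p.1 p.2 with ⟨-, heq⟩ | ⟨hsign, heq⟩
  · exact (sub_eq_zero.1 heq).ge
  · exact sub_nonneg.1 (heq ▸ kernelDiff_mul_mixedDiff_nonneg hJ hg H hp.1 hp.2 hsign)

/-- The integrand of `energy` as a function on the product space. -/
noncomputable def energyDensity (J : ℝ → ℝ) (g u v : E → ℝ) (p : E × E) : ℝ≥0∞ :=
  ENNReal.ofReal (J (u p.1 - v p.2) * g (p.1 - p.2))

lemma ofReal_reflectSum (hJ : ∀ t, 0 ≤ J t) (hg : IsRadialKernel g) (H : HalfSpace E)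
    (p : E × E) :
    ENNReal.ofReal (reflectSum J g H u v p) = energyDensity J g u v p +
      energyDensity J g u v (H.reflect p.1, H.reflect p.2) +
      energyDensity J g u v (p.1, H.reflect p.2) + energyDensity J g u v (H.reflect p.1, p.2) := by
  have hnonneg (s : ℝ) (z : E) : 0 ≤ J s * g z := mul_nonneg (hJ s) (hg.nonneg z)
  unfold energyDensity
  rw [← ENNReal.ofReal_add (hnonneg _ _) (hnonneg _ _),
    ← ENNReal.ofReal_add (add_nonneg (hnonneg _ _) (hnonneg _ _)) (hnonneg _ _),
    ← ENNReal.ofReal_add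
      (add_nonneg (add_nonneg (hnonneg _ _) (hnonneg _ _)) (hnonneg _ _)) (hnonneg _ _),
    hg.eq_of_norm_eq (H.norm_reflect_sub_reflect p.1 p.2),
    hg.eq_of_norm_eq (H.norm_reflect_sub p.1 p.2)]
  congr 1
  unfold reflectSum
  ring

end Energy

section EnergyMeasure

variable {E : Type*} [NormedAddCommGroup E] [InnerProductSpace ℝ E] [FiniteDimensional ℝ E]
  [MeasurableSpace E] [BorelSpace E] {J : ℝ → ℝ} {g u v : E → ℝ}

@[fun_prop]
lemma measurable_energyDensity (hJ : Continuous J) (hg : Measurable g) (hu : Measurable u)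
    (hv : Measurable v) : Measurable (energyDensity J g u v) := by
  have hJm := hJ.measurable
  unfold energyDensity
  fun_prop

lemma energy_eq_lintegral_prod (hJ : Continuous J) (hg : Measurable g) (hu : Measurable u)
    (hv : Measurable v) :
    energy J g u v = ∫⁻ p, energyDensity J g u v p ∂(volume.prod volume) := by
  rw [lintegral_prod _ (measurable_energyDensity hJ hg hu hv).aemeasurable]
  rfl

lemma energy_congr_ae {u' v' : E → ℝ} (hu : u =ᵐ[volume] u') (hv : v =ᵐ[volume] v') :
    energy J g u v = energy J g u' v' := by
  unfold energy
  refine lintegral_congr_ae ?_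
  filter_upwards [hu] with x hx
  refine lintegral_congr_ae ?_
  filter_upwards [hv] with y hy
  rw [hx, hy]

lemma energy_le_of_tendsto {G : ℕ → E → ℝ} {U W : ℕ → E → ℝ} {B : ℕ → ℝ≥0∞} {b : ℝ≥0∞}
    (hJ : Continuous J)
    (hG : ∀ k, Measurable (G k)) (hU : ∀ k, Measurable (U k)) (hW : ∀ k, Measurable (W k))
    (hg : Measurable g) (hu : Measurable u) (hv : Measurable v)
    (hGg : ∀ x, Tendsto (G · x) atTop (𝓝 (g x)))
    (hUu : ∀ᵐ x, Tendsto (U · x) atTop (𝓝 (u x))) (hWv : ∀ᵐ x, Tendsto (W · x) atTop (𝓝 (v x)))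
    (hB : ∀ k, energy J (G k) (U k) (W k) ≤ B k) (hb : Tendsto B atTop (𝓝 b)) :
    energy J g u v ≤ b := by
  have hlim : ∀ᵐ p : E × E ∂(volume.prod volume),
      Tendsto (fun k => energyDensity J (G k) (U k) (W k) p) atTop
        (𝓝 (energyDensity J g u v p)) := by
    filter_upwards [Measure.quasiMeasurePreserving_fst.ae hUu,
      Measure.quasiMeasurePreserving_snd.ae hWv] with p hp hq
    exact (ENNReal.continuous_ofReal.tendsto _).comp
      (((hJ.tendsto _).comp (hp.sub hq)).mul (hGg _))
  calc energy J g u v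
      = ∫⁻ p, liminf (fun k => energyDensity J (G k) (U k) (W k) p) atTop
          ∂(volume.prod volume) := by
        rw [energy_eq_lintegral_prod hJ hg hu hv]
        exact lintegral_congr_ae (hlim.mono fun p hp => hp.liminf_eq.symm)
    _ ≤ liminf (fun k => ∫⁻ p, energyDensity J (G k) (U k) (W k) p ∂(volume.prod volume))
          atTop :=
        lintegral_liminf_le fun k => measurable_energyDensity hJ (hG k) (hU k) (hW k)
    _ ≤ liminf B atTop := liminf_le_liminf (Eventually.of_forall fun k => by
        rw [← energy_eq_lintegral_prod hJ (hG k) (hU k) (hW k)]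
        exact hB k)
    _ = b := hb.liminf_eq

lemma four_mul_energy (hJ : IsConvexCost J) (hg : IsRadialKernel g) (H : HalfSpace E)
    (hu : Measurable u) (hv : Measurable v) :
    4 * energy J g u v = ∫⁻ p, ENNReal.ofReal (reflectSum J g H u v p) ∂(volume.prod volume) := by
  have hm := measurable_energyDensity hJ.continuous hg.measurable hu hv
  have hR := H.measurePreserving_reflect
  have hid := MeasurePreserving.id (volume : Measure E)
  have hfst := hR.prod hid
  have hsnd := hid.prod hR
  have hboth := hR.prod hR
  have hfst_eq := hfst.lintegral_comp hm
  have hsnd_eq := hsnd.lintegral_comp hm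
  have hboth_eq := hboth.lintegral_comp hm
  have hfst_meas := hm.comp hfst.measurable
  have hsnd_meas := hm.comp hsnd.measurable
  have hboth_meas := hm.comp hboth.measurable
  simp only [Function.comp_def, Prod.map, id] at *
  simp only [ofReal_reflectSum hJ.nonneg hg]
  rw [lintegral_add_right _ hfst_meas, lintegral_add_right _ hsnd_meas,
    lintegral_add_right _ hboth_meas, hfst_eq, hsnd_eq, hboth_eq,
    energy_eq_lintegral_prod hJ.continuous hg.measurable hu hv]
  ring

variable [Nontrivial E]

lemma ae_ne_and_ne_reflect (H : HalfSpace E) :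
    ∀ᵐ p : E × E ∂(volume.prod volume), p.1 ≠ p.2 ∧ p.1 ≠ H.reflect p.2 := by
  have hR := H.continuous_reflect.measurable
  have hmeas : MeasurableSet {p : E × E | p.1 ≠ p.2 ∧ p.1 ≠ H.reflect p.2} :=
    (measurableSet_eq_fun measurable_fst measurable_snd).compl.inter
      (measurableSet_eq_fun measurable_fst (hR.comp measurable_snd)).compl
  rw [Measure.ae_prod_iff_ae_ae hmeas, Measure.ae_ae_comm hmeas]
  refine Eventually.of_forall fun y => ?_
  filter_upwards [Measure.ae_ne volume y, Measure.ae_ne volume (H.reflect y)] with x hx hx'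
    using ⟨hx, hx'⟩

lemma energy_polarize_le (hJ : IsConvexCost J) (hg : IsRadialKernel g) (H : HalfSpace E)
    (hu : Measurable u) (hv : Measurable v) :
    energy J g (H.polarize u) (H.polarize v) ≤ energy J g u v := by
  refine (ENNReal.mul_le_mul_iff_right (a := 4) (by norm_num) (by norm_num)).1 ?_
  rw [four_mul_energy hJ hg H hu hv,
    four_mul_energy hJ hg H (H.measurable_polarize hu) (H.measurable_polarize hv)]
  refine lintegral_mono_ae ?_
  filter_upwards [ae_ne_and_ne_reflect H] with p hp
  exact ENNReal.ofReal_le_ofReal (reflectSum_polarize_le hJ.convexOn hg H hp)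

lemma ae_nonneg_of_energy_le_polarize (hJ : IsConvexCost J) (hJs : StrictConvexOn ℝ univ J)
    (hg : IsRadialKernel g) (hgs : ∀ x y, x ≠ 0 → ‖x‖ < ‖y‖ → g y < g x) (H : HalfSpace E)
    (hu : Measurable u) (hv : Measurable v) (hfin : energy J g u v ≠ ⊤)
    (hle : energy J g u v ≤ energy J g (H.polarize u) (H.polarize v)) :
    ∀ᵐ p : E × E ∂(volume.prod volume), 0 ≤ (H.height p.1 * H.height p.2) *
      ((u p.1 - u (H.reflect p.1)) * (v p.2 - v (H.reflect p.2))) := by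
  have hfin' : 4 * energy J g (H.polarize u) (H.polarize v) ≠ ⊤ :=
    ENNReal.mul_ne_top (by norm_num)
      (ne_top_of_le_ne_top hfin (energy_polarize_le hJ hg H hu hv))
  have hle' := mul_le_mul_right hle 4
  rw [four_mul_energy hJ hg H (H.measurable_polarize hu) (H.measurable_polarize hv)] at hfin' hle'
  rw [four_mul_energy hJ hg H hu hv] at hle'
  have hmeas : Measurable fun p => ENNReal.ofReal (reflectSum J g H u v p) := by
    have := hJ.continuous.measurable
    have := hg.measurable
    have := H.continuous_reflect.measurable
    unfold reflectSum
    fun_prop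
  have heq := ae_eq_of_ae_le_of_lintegral_le (by
    filter_upwards [ae_ne_and_ne_reflect H] with p hp
    exact ENNReal.ofReal_le_ofReal (reflectSum_polarize_le hJ.convexOn hg H hp))
    hfin' hmeas.aemeasurable hle'
  filter_upwards [heq, ae_ne_and_ne_reflect H] with p hpeq hp
  exact nonneg_of_reflectSum_le_polarize hJs hgs H hp
    ((ENNReal.ofReal_le_ofReal_iff (reflectSum_nonneg hJ.nonneg hg.nonneg H p)).1 hpeq.ge)

end EnergyMeasure

section LevelSets

variable {α : Type*} [MeasureSpace α] {u w : α → ℝ}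

/-- The functions admitting a rearrangement: measurable, nonnegative, with superlevel sets of
finite measure at every positive height. -/
structure IsRearrangeable (u : α → ℝ) : Prop where
  measurable : Measurable u
  nonneg : ∀ x, 0 ≤ u x
  volume_lt_top : ∀ t, 0 < t → volume {x | t < u x} < ⊤

/-- Two functions have the same distribution function at positive heights. -/
def Equimeasurable (u w : α → ℝ) : Prop :=
  ∀ t, 0 < t → volume {x | t < u x} = volume {x | t < w x}

lemma volume_lt_antitone (u : α → ℝ) : Antitone fun t => volume {x | t < u x} :=
  fun _ _ hst => measure_mono fun _ hx => hst.trans_lt hx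

lemma IsRearrangeable.of_equimeasurable (hu : IsRearrangeable u) (hw : Measurable w)
    (hw0 : ∀ x, 0 ≤ w x) (h : Equimeasurable w u) : IsRearrangeable w :=
  ⟨hw, hw0, fun t ht => (h t ht).trans_lt (hu.volume_lt_top t ht)⟩

lemma exists_gt_lt_volume {c : ℝ≥0∞} {t : ℝ} (h : c < volume {x | t < u x}) :
    ∃ s, t < s ∧ c < volume {x | s < u x} := by
  obtain ⟨a, ha_anti, hta, ha_lim⟩ := exists_seq_strictAnti_tendsto t
  have hunion : {x | t < u x} = ⋃ k, {x | a k < u x} := by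
    ext x
    simp only [mem_ofPred_eq, mem_iUnion]
    exact ⟨fun hx => (ha_lim.eventually_lt_const hx).exists, fun ⟨k, hk⟩ => (hta k).trans hk⟩
  have hmono : Monotone fun k => {x | a k < u x} :=
    fun _ _ hij _ hx => (ha_anti.antitone hij).trans_lt hx
  rw [hunion, hmono.measure_iUnion] at h
  obtain ⟨k, hk⟩ := lt_iSup_iff.1 h
  exact ⟨a k, hta k, hk⟩

lemma IsRearrangeable.exists_volume_lt (hu : IsRearrangeable u) {c : ℝ≥0∞} (hc : 0 < c) :
    ∃ t, 0 < t ∧ volume {x | t < u x} < c := by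
  have hempty : ⋂ k : ℕ, {x | (k : ℝ) + 1 < u x} = ∅ := by
    refine eq_empty_iff_forall_notMem.2 fun x hx => ?_
    obtain ⟨k, hk⟩ := exists_nat_ge (u x)
    have := mem_iInter.1 hx k
    rw [mem_ofPred_eq] at this
    linarith
  have hlim : Tendsto (fun k : ℕ => volume {x | (k : ℝ) + 1 < u x}) atTop
      (𝓝 (volume (⋂ k : ℕ, {x | (k : ℝ) + 1 < u x}))) := by
    refine tendsto_measure_iInter_atTop
      (fun k => (measurableSet_lt measurable_const hu.measurable).nullMeasurableSet)
      (fun i j hij x hx => ?_) ⟨0, (hu.volume_lt_top _ (by positivity)).ne⟩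
    have : (i : ℝ) ≤ j := by exact_mod_cast hij
    rw [mem_ofPred_eq] at hx ⊢
    linarith
  rw [hempty, measure_empty] at hlim
  obtain ⟨k, hk⟩ := (hlim.eventually_lt_const hc).exists
  exact ⟨k + 1, by positivity, hk⟩

lemma IsRearrangeable.exists_setOf_lt_volume_eq_Ioo (hu : IsRearrangeable u) {c : ℝ≥0∞}
    (hc : 0 < c) : ∃ b, 0 ≤ b ∧ {t | 0 < t ∧ c < volume {x | t < u x}} = Ioo 0 b := by
  set T : Set ℝ := {t | 0 < t ∧ c < volume {x | t < u x}}
  obtain ⟨M, -, hM⟩ := hu.exists_volume_lt hc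
  have hbdd : BddAbove T := ⟨M, fun t ht => by
    by_contra! hMt
    exact (ht.2.trans_le (volume_lt_antitone u hMt.le)).not_gt hM⟩
  refine ⟨sSup T, Real.sSup_nonneg fun t ht => ht.1.le, Subset.antisymm (fun t ht => ?_)
    fun t ht => ?_⟩
  · obtain ⟨s, hts, hs⟩ := exists_gt_lt_volume ht.2
    exact ⟨ht.1, hts.trans_le (le_csSup hbdd ⟨ht.1.trans hts, hs⟩)⟩
  · have hne : T.Nonempty := by
      by_contra hne
      rw [not_nonempty_iff_eq_empty.1 hne, Real.sSup_empty] at ht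
      exact ht.1.not_gt ht.2
    obtain ⟨s, hs, hts⟩ := exists_lt_of_lt_csSup hne ht.2
    exact ⟨ht.1, hs.2.trans_le (volume_lt_antitone u hts.le)⟩

lemma eq_of_forall_pos_rat_lt_iff {a b : ℝ} (ha : 0 ≤ a) (hb : 0 ≤ b)
    (h : ∀ q : ℚ, 0 < (q : ℝ) → (q < a ↔ q < b)) : a = b := by
  by_contra hne
  rcases lt_or_gt_of_ne hne with hab | hab
  · obtain ⟨q, haq, hqb⟩ := exists_rat_btwn hab
    exact haq.not_gt ((h q (ha.trans_lt haq)).2 hqb)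
  · obtain ⟨q, hbq, hqa⟩ := exists_rat_btwn hab
    exact hbq.not_gt ((h q (hb.trans_lt hbq)).1 hqa)

lemma measurable_of_measurableSet_pos_lt {α : Type*} [MeasurableSpace α] {f : α → ℝ}
    (hf : ∀ x, 0 ≤ f x) (h : ∀ t, 0 < t → MeasurableSet {x | t < f x}) : Measurable f := by
  refine measurable_of_Ioi fun t => ?_
  rcases lt_or_ge t 0 with ht | ht
  · rw [preimage_eq_univ_iff.2 (by rintro _ ⟨x, rfl⟩; exact ht.trans_le (hf x))]
    exact MeasurableSet.univ
  · obtain ⟨a, -, hta, ha_lim⟩ := exists_seq_strictAnti_tendsto t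
    have hunion : f ⁻¹' Ioi t = ⋃ k, {x | a k < f x} := by
      ext x
      simp only [mem_preimage, mem_Ioi, mem_iUnion, mem_ofPred_eq]
      exact ⟨fun hx => (ha_lim.eventually_lt_const hx).exists, fun ⟨k, hk⟩ => (hta k).trans hk⟩
    rw [hunion]
    exact MeasurableSet.iUnion fun k => h _ (ht.trans_lt (hta k))

lemma HalfSpace.equimeasurable_polarize {E : Type*} [NormedAddCommGroup E]
    [InnerProductSpace ℝ E] [FiniteDimensional ℝ E] [MeasurableSpace E] [BorelSpace E]
    (H : HalfSpace E) {u : E → ℝ} (hu : Measurable u) : Equimeasurable (H.polarize u) u :=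
  fun t _ => H.volume_lt_polarize hu t

end LevelSets

section Schwarz

lemma volume_ball_lt_volume_ball_iff {E : Type*} [NormedAddCommGroup E] [InnerProductSpace ℝ E]
    [FiniteDimensional ℝ E] [MeasurableSpace E] [BorelSpace E] [Nontrivial E] (c d : E) {r R : ℝ}
    (hr : 0 ≤ r) (hR : 0 ≤ R) :
    volume (Metric.ball c r) < volume (Metric.ball d R) ↔ r < R := by
  rw [Measure.addHaar_ball _ c hr, Measure.addHaar_ball _ d hR,
    ENNReal.mul_lt_mul_iff_left (Metric.measure_ball_pos _ _ one_pos).ne' measure_ball_lt_top.ne,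
    ENNReal.ofReal_lt_ofReal_iff', pow_lt_pow_iff_left₀ hr hR Module.finrank_pos.ne']
  exact and_iff_left_of_imp fun h => pow_pos (hr.trans_lt h) _

variable {n : ℕ} {u w : EuclideanSpace ℝ (Fin n) → ℝ}

lemma schwarzRadius_nonneg (A : Set (EuclideanSpace ℝ (Fin n))) : 0 ≤ schwarzRadius n A := by
  unfold schwarzRadius
  positivity

lemma schwarzRearr_nonneg (u : EuclideanSpace ℝ (Fin n) → ℝ) (x : EuclideanSpace ℝ (Fin n)) :
    0 ≤ schwarzRearr n u x :=
  integral_nonneg fun _ => indicator_nonneg (fun _ _ => zero_le_one) _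

lemma schwarzRearr_congr (hu : ∀ x, 0 ≤ u x) (hw : ∀ x, 0 ≤ w x) (h : Equimeasurable u w) :
    schwarzRearr n u = schwarzRearr n w := by
  funext x
  refine setIntegral_congr_fun measurableSet_Ioi fun t ht => ?_
  simp only [schwarzSet, schwarzRadius, abs_of_nonneg (hu _), abs_of_nonneg (hw _), h t ht]

variable [NeZero n]

lemma volume_ball_schwarzRadius (c : EuclideanSpace ℝ (Fin n))
    {A : Set (EuclideanSpace ℝ (Fin n))} (hA : volume A ≠ ⊤) :
    volume (Metric.ball c (schwarzRadius n A)) = volume A := by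
  have hunit : (volume (Metric.ball (0 : EuclideanSpace ℝ (Fin n)) 1)).toReal ≠ 0 :=
    (ENNReal.toReal_pos (Metric.measure_ball_pos _ _ one_pos).ne' measure_ball_lt_top.ne).ne'
  have hpow : schwarzRadius n A ^ n =
      (volume A).toReal / (volume (Metric.ball (0 : EuclideanSpace ℝ (Fin n)) 1)).toReal :=
    Real.rpow_inv_natCast_pow (by positivity) (NeZero.ne n)
  rw [Measure.addHaar_ball _ c (schwarzRadius_nonneg A), finrank_euclideanSpace_fin, hpow,
    ← ENNReal.toReal_div, ENNReal.ofReal_toReal, ENNReal.div_mul_cancel]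
  · exact (ENNReal.toReal_ne_zero.1 hunit).1
  · exact measure_ball_lt_top.ne
  · exact ENNReal.div_ne_top hA (ENNReal.toReal_ne_zero.1 hunit).1

lemma lt_schwarzRadius_iff {A : Set (EuclideanSpace ℝ (Fin n))} (hA : volume A ≠ ⊤)
    (c : EuclideanSpace ℝ (Fin n)) {r : ℝ} (hr : 0 ≤ r) :
    r < schwarzRadius n A ↔ volume (Metric.ball c r) < volume A := by
  rw [← volume_ball_schwarzRadius c hA,
    volume_ball_lt_volume_ball_iff c c hr (schwarzRadius_nonneg A)]

lemma lt_schwarzRearr_iff (hu : IsRearrangeable u) {x : EuclideanSpace ℝ (Fin n)} (hx : x ≠ 0)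
    {t : ℝ} (ht : 0 < t) :
    t < schwarzRearr n u x ↔
      volume (Metric.ball (0 : EuclideanSpace ℝ (Fin n)) ‖x‖) < volume {y | t < u y} := by
  obtain ⟨b, hb, hIoo⟩ := hu.exists_setOf_lt_volume_eq_Ioo
    (Metric.measure_ball_pos volume (0 : EuclideanSpace ℝ (Fin n)) (norm_pos_iff.2 hx))
  have hmem (s : ℝ) : 0 < s ∧ volume (Metric.ball (0 : EuclideanSpace ℝ (Fin n)) ‖x‖) <
      volume {y | s < u y} ↔ s ∈ Ioo 0 b := by
    rw [← hIoo, mem_ofPred_eq]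
  have hval : schwarzRearr n u x = b := by
    have hind : ∀ s ∈ Ioi (0 : ℝ), (schwarzSet n {y | s < |u y|}).indicator (fun _ => (1 : ℝ)) x =
        (Ioo 0 b).indicator (fun _ => (1 : ℝ)) s := by
      intro s hs
      have hiff : x ∈ schwarzSet n {y | s < u y} ↔ s ∈ Ioo 0 b := by
        rw [schwarzSet, mem_ball_zero_iff,
          lt_schwarzRadius_iff (hu.volume_lt_top s hs).ne 0 (norm_nonneg x), ← hmem s]
        exact (and_iff_right (mem_Ioi.1 hs)).symm
      simp only [abs_of_nonneg (hu.nonneg _), indicator, hiff]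
    rw [schwarzRearr, setIntegral_congr_fun measurableSet_Ioi hind,
      setIntegral_indicator measurableSet_Ioo, inter_eq_right.2 Ioo_subset_Ioi_self]
    simp [hb]
  rw [hval, ← and_iff_right (b := t < b) ht, ← mem_Ioo, ← hmem t, and_iff_right ht]

lemma setOf_lt_schwarzRearr_sdiff_zero (hu : IsRearrangeable u) {t : ℝ} (ht : 0 < t) :
    {x | t < schwarzRearr n u x} \ {0} =
      Metric.ball 0 (schwarzRadius n {y | t < u y}) \ {0} := by
  ext x
  simp only [Set.mem_sdiff, mem_ofPred_eq, mem_singleton_iff, mem_ball_zero_iff]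
  refine and_congr_left fun hx => ?_
  rw [lt_schwarzRearr_iff hu hx ht,
    lt_schwarzRadius_iff (hu.volume_lt_top t ht).ne 0 (norm_nonneg x)]

lemma measurable_schwarzRearr (hu : IsRearrangeable u) : Measurable (schwarzRearr n u) := by
  refine measurable_of_measurableSet_pos_lt (schwarzRearr_nonneg u) fun t ht => ?_
  rw [← sdiff_union_inter {x | t < schwarzRearr n u x} {0},
    setOf_lt_schwarzRearr_sdiff_zero hu ht]
  exact (measurableSet_ball.diff (measurableSet_singleton 0)).union
    (subsingleton_singleton.anti inter_subset_right).measurableSet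

lemma equimeasurable_schwarzRearr (hu : IsRearrangeable u) :
    Equimeasurable (schwarzRearr n u) u := by
  intro t ht
  rw [← measure_sdiff_null (measure_singleton 0), setOf_lt_schwarzRearr_sdiff_zero hu ht,
    measure_sdiff_null (measure_singleton 0),
    volume_ball_schwarzRadius 0 (hu.volume_lt_top t ht).ne]

lemma isRearrangeable_schwarzRearr (hu : IsRearrangeable u) :
    IsRearrangeable (schwarzRearr n u) :=
  hu.of_equimeasurable (measurable_schwarzRearr hu) (schwarzRearr_nonneg u)
    (equimeasurable_schwarzRearr hu)

end Schwarz

section InheritsBounds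

variable {E : Type*} [NormedAddCommGroup E] {u w : E → ℝ}

/-- `w` is nonnegative and obeys every upper bound, every centred support bound and every modulus
of continuity that `u` obeys. Polarizing by half-spaces that contain the origin preserves this
property, and for a fixed `u` it defines a compact class. -/
structure InheritsBounds (u w : E → ℝ) : Prop where
  nonneg : ∀ x, 0 ≤ w x
  le : ∀ M, (∀ x, u x ≤ M) → ∀ x, w x ≤ M
  eq_zero : ∀ R, (∀ x, R < ‖x‖ → u x = 0) → ∀ x, R < ‖x‖ → w x = 0
  abs_sub_le : ∀ ε δ, (∀ x y, ‖x - y‖ < δ → |u x - u y| ≤ ε) →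
    ∀ x y, ‖x - y‖ < δ → |w x - w y| ≤ ε

namespace InheritsBounds

lemma refl (hu : ∀ x, 0 ≤ u x) : InheritsBounds u u :=
  ⟨hu, fun _ h => h, fun _ h => h, fun _ _ h => h⟩

lemma polarize [InnerProductSpace ℝ E] (h : InheritsBounds u w) (H : HalfSpace E)
    (hH : 0 ≤ H.height 0) : InheritsBounds u (H.polarize w) where
  nonneg := H.polarize_nonneg h.nonneg
  le M hM x := by
    rcases H.polarize_eq_or w x with hx | hx <;> rw [hx] <;> exact h.le M hM _
  eq_zero R hR _ hx := H.polarize_eq_zero_of_lt_norm hH h.nonneg (h.eq_zero R hR) hx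
  abs_sub_le ε δ hu _ _ hxy := H.abs_polarize_sub_le (h.abs_sub_le ε δ hu) hxy

lemma exists_modulus (hu : UniformContinuous u) {ε : ℝ} (hε : 0 < ε) :
    ∃ δ > 0, ∀ w, InheritsBounds u w → ∀ x y, ‖x - y‖ < δ → |w x - w y| ≤ ε := by
  obtain ⟨δ, hδ, hmod⟩ := Metric.uniformContinuous_iff.1 hu ε hε
  refine ⟨δ, hδ, fun w hw => hw.abs_sub_le ε δ fun x y hxy => ?_⟩
  rw [← Real.dist_eq]
  exact (hmod (by rwa [dist_eq_norm])).le

lemma continuous (hu : UniformContinuous u) (h : InheritsBounds u w) : Continuous w := by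
  refine Metric.continuous_iff.2 fun x ε hε => ?_
  obtain ⟨δ, hδ, hmod⟩ := exists_modulus hu (half_pos hε)
  refine ⟨δ, hδ, fun y hyx => ?_⟩
  rw [dist_eq_norm] at hyx
  exact (Real.dist_eq _ _ ▸ hmod w h y x hyx).trans_lt (half_lt_self hε)

lemma exists_support_radius (hu : HasCompactSupport u) :
    ∃ R, ∀ w, InheritsBounds u w → ∀ x, R < ‖x‖ → w x = 0 := by
  obtain ⟨R, hR⟩ := hu.isCompact.isBounded.subset_closedBall (0 : E)
  refine ⟨R, fun w hw => hw.eq_zero R fun x hx => ?_⟩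
  by_contra hne
  exact hx.not_ge (mem_closedBall_zero_iff.1 (hR (subset_tsupport u hne)))

lemma exists_bound (huc : Continuous u) (hus : HasCompactSupport u) :
    ∃ M, ∀ w, InheritsBounds u w → ∀ x, w x ≤ M := by
  obtain ⟨M, hM⟩ := huc.bddAbove_range_of_hasCompactSupport hus
  exact ⟨M, fun w hw => hw.le M fun x => hM (mem_range_self x)⟩

lemma isClosed_setOf (u : E → ℝ) : IsClosed {w | InheritsBounds u w} := by
  have hinter : {w | InheritsBounds u w} = {w | ∀ x, 0 ≤ w x} ∩
      {w | ∀ M, (∀ x, u x ≤ M) → ∀ x, w x ≤ M} ∩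
      {w | ∀ R, (∀ x, R < ‖x‖ → u x = 0) → ∀ x, R < ‖x‖ → w x = 0} ∩
      {w | ∀ ε δ, (∀ x y, ‖x - y‖ < δ → |u x - u y| ≤ ε) →
        ∀ x y, ‖x - y‖ < δ → |w x - w y| ≤ ε} :=
    Subset.antisymm (fun w h => ⟨⟨⟨h.nonneg, h.le⟩, h.eq_zero⟩, h.abs_sub_le⟩)
      fun w h => ⟨h.1.1.1, h.1.1.2, h.1.2, h.2⟩
  rw [hinter]
  simp only [ofPred_forall]
  refine ((IsClosed.inter ?_ ?_).inter ?_).inter ?_ <;>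
    repeat' refine isClosed_iInter fun _ => ?_
  · exact isClosed_le (by fun_prop) (by fun_prop)
  · exact isClosed_le (by fun_prop) (by fun_prop)
  · exact isClosed_eq (by fun_prop) (by fun_prop)
  · exact isClosed_le (by fun_prop) (by fun_prop)

lemma isCompact_setOf (huc : Continuous u) (hus : HasCompactSupport u) :
    IsCompact {w : C(E, ℝ) | InheritsBounds u w} := by
  have huu := hus.uniformContinuous_of_continuous huc
  obtain ⟨M, hM⟩ := exists_bound huc hus
  refine ArzelaAscoli.isCompact_of_equicontinuous _ ?_ fun x => ?_
  · have himage : ContinuousMap.toFun '' {w : C(E, ℝ) | InheritsBounds u w} =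
        {w | InheritsBounds u w} :=
      Subset.antisymm (by rintro _ ⟨w, hw, rfl⟩; exact hw)
        fun w hw => ⟨⟨w, hw.continuous huu⟩, hw, rfl⟩
    rw [himage]
    exact (isCompact_univ_pi fun _ => isCompact_Icc (a := 0) (b := M)).of_isClosed_subset
      (isClosed_setOf u) fun w hw x _ => ⟨hw.nonneg x, hM w hw x⟩
  · refine Metric.equicontinuousAt_iff.2 fun ε hε => ?_
    obtain ⟨δ, hδ, hmod⟩ := exists_modulus huu (half_pos hε)
    refine ⟨δ, hδ, fun y hyx w => ?_⟩
    rw [dist_comm, dist_eq_norm] at hyx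
    exact (Real.dist_eq _ _ ▸ hmod w w.2 x y hyx).trans_lt (half_lt_self hε)

lemma tendstoUniformly [ProperSpace E] (hus : HasCompactSupport u) {W : ℕ → C(E, ℝ)}
    {w : C(E, ℝ)} (hW : ∀ k, InheritsBounds u (W k)) (hw : InheritsBounds u w)
    (h : Tendsto W atTop (𝓝 w)) : TendstoUniformly (fun k => ⇑(W k)) w atTop := by
  obtain ⟨R, hR⟩ := exists_support_radius hus
  have hball := ContinuousMap.tendsto_iff_forall_isCompact_tendstoUniformlyOn.1 h _
    (isCompact_closedBall (0 : E) R)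
  rw [Metric.tendstoUniformlyOn_iff] at hball
  refine Metric.tendstoUniformly_iff.2 fun ε hε => ?_
  filter_upwards [hball ε hε] with k hk x
  rcases le_or_gt ‖x‖ R with hx | hx
  · exact hk x (mem_closedBall_zero_iff.2 hx)
  · rwa [hR _ hw x hx, hR _ (hW k) x hx, dist_self]

variable [MeasureSpace E] [BorelSpace E] [ProperSpace E]

lemma isRearrangeable [IsFiniteMeasureOnCompacts (volume : Measure E)]
    (huc : Continuous u) (hus : HasCompactSupport u) (h : InheritsBounds u w) :
    IsRearrangeable w := by
  refine ⟨(h.continuous (hus.uniformContinuous_of_continuous huc)).measurable, h.nonneg,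
    fun t ht => ?_⟩
  obtain ⟨R, hR⟩ := exists_support_radius hus
  refine (measure_mono (t := Metric.closedBall 0 R) fun x hx => ?_).trans_lt
    measure_closedBall_lt_top
  rw [mem_closedBall_zero_iff]
  by_contra! hxR
  exact (ht.trans hx).ne' (hR w h x hxR)

end InheritsBounds

lemma equimeasurable_of_tendstoUniformly {α : Type*} [MeasureSpace α] {u w : α → ℝ}
    {W : ℕ → α → ℝ} (hW : ∀ k, Equimeasurable (W k) u) (h : TendstoUniformly W w atTop) :
    Equimeasurable w u := by
  have hclose (ε : ℝ) (hε : 0 < ε) : ∃ k, ∀ x, |w x - W k x| < ε :=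
    (Metric.tendstoUniformly_iff.1 h ε hε).exists
  intro t ht
  refine le_antisymm (le_of_not_gt fun hlt => ?_) (le_of_not_gt fun hlt => ?_)
  · obtain ⟨s, hts, hs⟩ := exists_gt_lt_volume hlt
    obtain ⟨k, hk⟩ := hclose (s - t) (sub_pos.2 hts)
    rw [← hW k t ht] at hs
    refine hs.not_ge (measure_mono fun x (hx : s < w x) => ?_)
    rw [mem_ofPred_eq]
    linarith [(abs_lt.1 (hk x)).2]
  · obtain ⟨s, hts, hs⟩ := exists_gt_lt_volume hlt
    obtain ⟨k, hk⟩ := hclose (s - t) (sub_pos.2 hts)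
    rw [← hW k s (ht.trans hts)] at hs
    refine hs.not_ge (measure_mono fun x (hx : s < W k x) => ?_)
    rw [mem_ofPred_eq]
    linarith [(abs_lt.1 (hk x)).1]

end InheritsBounds

section MomentLoss

variable {E : Type*} [NormedAddCommGroup E] [InnerProductSpace ℝ E] {w : E → ℝ}

namespace HalfSpace

variable (H : HalfSpace E)

/-- The loss of second moment under polarization, symmetrized over a pair of mirror points. -/
noncomputable def momentLoss (w : E → ℝ) (x : E) : ℝ :=
  ‖x‖ ^ 2 * (w x - H.polarize w x) +
    ‖H.reflect x‖ ^ 2 * (w (H.reflect x) - H.polarize w (H.reflect x))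

lemma momentLoss_nonneg (hH : 0 ≤ H.height 0) (w : E → ℝ) (x : E) : 0 ≤ H.momentLoss w x := by
  rw [momentLoss, norm_reflect_sq]
  rcases H.polarize_cases w x with ⟨hx, hx', -⟩ | ⟨hx, hx', hsign⟩
  · simp [hx, hx']
  · rw [hx, hx']
    linarith [mul_nonneg hH (neg_nonneg.2 hsign)]

lemma le_of_momentLoss_eq_zero (hH : 0 < H.height 0) {x : E} (hx : 0 < H.height x)
    (h : H.momentLoss w x = 0) : w (H.reflect x) ≤ w x := by
  by_contra! hlt
  have hpol : H.polarize w x = w (H.reflect x) := by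
    rw [polarize, if_pos hx.le, max_eq_right hlt.le]
  have hpol' : H.polarize w (H.reflect x) = w x := by
    rw [polarize, height_reflect, if_neg (by linarith), reflect_reflect, min_eq_right hlt.le]
  rw [momentLoss, norm_reflect_sq, hpol, hpol'] at h
  linarith [mul_pos (mul_pos hH hx) (sub_pos.2 hlt)]

end HalfSpace

end MomentLoss

section SecondMoment

variable {E : Type*} [NormedAddCommGroup E] [InnerProductSpace ℝ E] [FiniteDimensional ℝ E]
  [MeasurableSpace E] [BorelSpace E] {u w : E → ℝ}

/-- The second moment `∫ ‖x‖² w x dx`, the quantity that polarization by half-spaces containing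
the origin decreases. -/
noncomputable def secondMoment (w : E → ℝ) : ℝ := ∫ x, ‖x‖ ^ 2 * w x

lemma InheritsBounds.tendsto_secondMoment (huc : Continuous u) (hus : HasCompactSupport u)
    {W : ℕ → E → ℝ} (hW : ∀ k, InheritsBounds u (W k))
    (h : ∀ x, Tendsto (W · x) atTop (𝓝 (w x))) :
    Tendsto (fun k => secondMoment (W k)) atTop (𝓝 (secondMoment w)) := by
  obtain ⟨M, hM⟩ := exists_bound huc hus
  obtain ⟨R, hR⟩ := exists_support_radius hus
  have huu := hus.uniformContinuous_of_continuous huc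
  refine tendsto_integral_of_dominated_convergence
    ((Metric.closedBall (0 : E) R).indicator fun _ => R ^ 2 * M)
    (fun k => ((continuous_norm.pow 2).mul ((hW k).continuous huu)).aestronglyMeasurable) ?_
    (fun k => Eventually.of_forall fun x => ?_) (Eventually.of_forall fun x => (h x).const_mul _)
  · rw [integrable_indicator_iff measurableSet_closedBall]
    exact integrableOn_const measure_closedBall_lt_top.ne
  · have hnonneg := (hW k).nonneg x
    rcases le_or_gt ‖x‖ R with hx | hx
    · rw [indicator_of_mem (mem_closedBall_zero_iff.2 hx), norm_of_nonneg (by positivity)]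
      gcongr
      exact hM _ (hW k) x
    · rw [indicator_of_notMem (by simpa using hx), hR _ (hW k) x hx, mul_zero, norm_zero]

lemma InheritsBounds.integrable (huc : Continuous u) (hus : HasCompactSupport u)
    (h : InheritsBounds u w) : Integrable fun x => ‖x‖ ^ 2 * w x := by
  obtain ⟨R, hR⟩ := exists_support_radius hus
  refine ((continuous_norm.pow 2).mul (h.continuous
    (hus.uniformContinuous_of_continuous huc))).integrable_of_hasCompactSupport ?_
  refine HasCompactSupport.intro (isCompact_closedBall (0 : E) R) fun x hx => ?_
  rw [mem_closedBall_zero_iff, not_le] at hx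
  simp [hR w h x hx]

namespace HalfSpace

variable (H : HalfSpace E)

lemma measurableEmbedding_reflect : MeasurableEmbedding H.reflect :=
  H.continuous_reflect.measurableEmbedding (Function.LeftInverse.injective H.reflect_reflect)

lemma integrable_mul_sub_polarize (hw : Integrable fun x => ‖x‖ ^ 2 * w x)
    (hpol : Integrable fun x => ‖x‖ ^ 2 * H.polarize w x) :
    Integrable fun x => ‖x‖ ^ 2 * (w x - H.polarize w x) :=
  (hw.sub hpol).congr (Eventually.of_forall fun _ => (mul_sub _ _ _).symm)

lemma integrable_momentLoss (hw : Integrable fun x => ‖x‖ ^ 2 * w x)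
    (hpol : Integrable fun x => ‖x‖ ^ 2 * H.polarize w x) : Integrable (H.momentLoss w) :=
  have hdiff := H.integrable_mul_sub_polarize hw hpol
  hdiff.add
    ((H.measurePreserving_reflect.integrable_comp_emb H.measurableEmbedding_reflect).2 hdiff)

lemma integral_momentLoss (hw : Integrable fun x => ‖x‖ ^ 2 * w x)
    (hpol : Integrable fun x => ‖x‖ ^ 2 * H.polarize w x) :
    ∫ x, H.momentLoss w x = 2 * (secondMoment w - secondMoment (H.polarize w)) := by
  have hR := H.measurePreserving_reflect
  have hemb := H.measurableEmbedding_reflect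
  have hdiff := H.integrable_mul_sub_polarize hw hpol
  have hmoment : ∫ x, ‖x‖ ^ 2 * (w x - H.polarize w x) =
      secondMoment w - secondMoment (H.polarize w) := by
    simp only [mul_sub]
    exact integral_sub hw hpol
  have hreflect := hR.integral_comp hemb fun x => ‖x‖ ^ 2 * (w x - H.polarize w x)
  have hadd := integral_add hdiff ((hR.integrable_comp_emb hemb).2 hdiff)
  exact hadd.trans (by rw [two_mul, ← hmoment]; exact congrArg _ hreflect)

lemma secondMoment_polarize_le (hH : 0 ≤ H.height 0) (hw : Integrable fun x => ‖x‖ ^ 2 * w x)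
    (hpol : Integrable fun x => ‖x‖ ^ 2 * H.polarize w x) :
    secondMoment (H.polarize w) ≤ secondMoment w := by
  have := H.integral_momentLoss hw hpol ▸ integral_nonneg (H.momentLoss_nonneg hH w)
  linarith

lemma reflect_le_of_secondMoment_le (huc : Continuous u) (hus : HasCompactSupport u)
    (hw : InheritsBounds u w) (hH : 0 < H.height 0)
    (hle : secondMoment w ≤ secondMoment (H.polarize w)) {x : E} (hx : 0 < H.height x) :
    w (H.reflect x) ≤ w x := by
  have huu := hus.uniformContinuous_of_continuous huc
  have hpol := hw.polarize H hH.le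
  have hwi := hw.integrable huc hus
  have hpoli := hpol.integrable huc hus
  have hwc := hw.continuous huu
  have hpolc := hpol.continuous huu
  have := H.continuous_reflect
  have hcont : Continuous (H.momentLoss w) := by
    unfold momentLoss
    fun_prop
  have hloss : ∫ x, H.momentLoss w x = 0 := by
    rw [H.integral_momentLoss hwi hpoli]
    linarith [H.secondMoment_polarize_le hH.le hwi hpoli]
  have hzero := (integral_eq_zero_iff_of_nonneg (H.momentLoss_nonneg hH.le w)
    (H.integrable_momentLoss hwi hpoli)).1 hloss
  exact H.le_of_momentLoss_eq_zero hH hx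
    (congrFun ((hcont.ae_eq_iff_eq volume continuous_const).1 hzero) x)

end HalfSpace

end SecondMoment

section Competitor

variable {E : Type*} [NormedAddCommGroup E] [InnerProductSpace ℝ E] [FiniteDimensional ℝ E]
  [MeasurableSpace E] [BorelSpace E] {J : ℝ → ℝ} {g u v w z : E → ℝ}

/-- A competitor of `(u, v)` is a pair with the same distribution functions, which inherits the
bounds of `u` and `v` and has at most their energy. -/
structure IsCompetitor (J : ℝ → ℝ) (g u v w z : E → ℝ) : Prop where
  inheritsBounds_left : InheritsBounds u w
  inheritsBounds_right : InheritsBounds v z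
  equimeasurable_left : Equimeasurable w u
  equimeasurable_right : Equimeasurable z v
  energy_le : energy J g w z ≤ energy J g u v

namespace IsCompetitor

lemma refl (hu : ∀ x, 0 ≤ u x) (hv : ∀ x, 0 ≤ v x) : IsCompetitor J g u v u v :=
  ⟨.refl hu, .refl hv, fun _ _ => rfl, fun _ _ => rfl, le_rfl⟩

lemma polarize [Nontrivial E] (hJ : IsConvexCost J) (hg : IsRadialKernel g)
    (h : IsCompetitor J g u v w z) (hw : Measurable w) (hz : Measurable z) (H : HalfSpace E)
    (hH : 0 ≤ H.height 0) : IsCompetitor J g u v (H.polarize w) (H.polarize z) where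
  inheritsBounds_left := h.inheritsBounds_left.polarize H hH
  inheritsBounds_right := h.inheritsBounds_right.polarize H hH
  equimeasurable_left t ht :=
    (H.equimeasurable_polarize hw t ht).trans (h.equimeasurable_left t ht)
  equimeasurable_right t ht :=
    (H.equimeasurable_polarize hz t ht).trans (h.equimeasurable_right t ht)
  energy_le := (energy_polarize_le hJ hg H hw hz).trans h.energy_le

lemma of_tendsto (huc : Continuous u) (hus : HasCompactSupport u)
    (hvc : Continuous v) (hvs : HasCompactSupport v)
    (hJ : Continuous J) (hg : Measurable g) {W Z : ℕ → C(E, ℝ)} {w z : C(E, ℝ)}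
    (hWZ : ∀ k, IsCompetitor J g u v (W k) (Z k)) (hW : Tendsto W atTop (𝓝 w))
    (hZ : Tendsto Z atTop (𝓝 z)) : IsCompetitor J g u v w z := by
  have hW_bounds k := (hWZ k).inheritsBounds_left
  have hZ_bounds k := (hWZ k).inheritsBounds_right
  have hw : InheritsBounds u w := (InheritsBounds.isCompact_setOf huc hus).isClosed.mem_of_tendsto
    hW (Eventually.of_forall hW_bounds)
  have hz : InheritsBounds v z := (InheritsBounds.isCompact_setOf hvc hvs).isClosed.mem_of_tendsto
    hZ (Eventually.of_forall hZ_bounds)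
  have hW_unif := InheritsBounds.tendstoUniformly hus hW_bounds hw hW
  have hZ_unif := InheritsBounds.tendstoUniformly hvs hZ_bounds hz hZ
  refine ⟨hw, hz,
    equimeasurable_of_tendstoUniformly (fun k => (hWZ k).equimeasurable_left) hW_unif,
    equimeasurable_of_tendstoUniformly (fun k => (hWZ k).equimeasurable_right) hZ_unif, ?_⟩
  exact energy_le_of_tendsto hJ (fun _ => hg) (fun k => (W k).measurable)
    (fun k => (Z k).measurable) hg w.measurable z.measurable (fun _ => tendsto_const_nhds)
    (Eventually.of_forall hW_unif.tendsto_at) (Eventually.of_forall hZ_unif.tendsto_at)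
    (fun k => (hWZ k).energy_le) tendsto_const_nhds

lemma isCompact_setOf (huc : Continuous u) (hus : HasCompactSupport u)
    (hvc : Continuous v) (hvs : HasCompactSupport v)
    (hJ : Continuous J) (hg : Measurable g) :
    IsCompact {p : C(E, ℝ) × C(E, ℝ) | IsCompetitor J g u v p.1 p.2} := by
  refine ((InheritsBounds.isCompact_setOf huc hus).prod
    (InheritsBounds.isCompact_setOf hvc hvs)).of_isClosed_subset (IsSeqClosed.isClosed ?_)
    fun p hp => ⟨hp.inheritsBounds_left, hp.inheritsBounds_right⟩
  intro P p hP hlim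
  exact of_tendsto huc hus hvc hvs hJ hg hP ((continuous_fst.tendsto p).comp hlim)
    ((continuous_snd.tendsto p).comp hlim)

lemma continuousOn_secondMoment (huc : Continuous u) (hus : HasCompactSupport u)
    (hvc : Continuous v) (hvs : HasCompactSupport v) :
    ContinuousOn (fun p : C(E, ℝ) × C(E, ℝ) => secondMoment p.1 + secondMoment p.2)
      {p | IsCompetitor J g u v p.1 p.2} := by
  refine continuousOn_iff_continuous_domRestrict.2 (continuous_iff_seqContinuous.2 ?_)
  intro P p hlim
  have hpair := (continuous_subtype_val.tendsto p).comp hlim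
  have hfst (x : E) := ((continuous_eval_const x).tendsto _).comp
    ((continuous_fst.tendsto _).comp hpair)
  have hsnd (x : E) := ((continuous_eval_const x).tendsto _).comp
    ((continuous_snd.tendsto _).comp hpair)
  exact (InheritsBounds.tendsto_secondMoment huc hus (fun k => (P k).2.inheritsBounds_left)
    hfst).add (InheritsBounds.tendsto_secondMoment hvc hvs
      (fun k => (P k).2.inheritsBounds_right) hsnd)

lemma exists_secondMoment_minimizer (huc : Continuous u) (hus : HasCompactSupport u)
    (hvc : Continuous v) (hvs : HasCompactSupport v)
    (hJ : Continuous J) (hg : Measurable g)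
    (hu : ∀ x, 0 ≤ u x) (hv : ∀ x, 0 ≤ v x) :
    ∃ w z, IsCompetitor J g u v w z ∧ ∀ w' z', IsCompetitor J g u v w' z' →
      secondMoment w + secondMoment z ≤ secondMoment w' + secondMoment z' := by
  obtain ⟨p, hp, hmin⟩ := (isCompact_setOf huc hus hvc hvs hJ hg).exists_isMinOn
    ⟨(⟨u, huc⟩, ⟨v, hvc⟩), refl hu hv⟩ (continuousOn_secondMoment huc hus hvc hvs)
  refine ⟨p.1, p.2, hp, fun w z h => ?_⟩
  have hw := h.inheritsBounds_left.continuous (hus.uniformContinuous_of_continuous huc)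
  have hz := h.inheritsBounds_right.continuous (hvs.uniformContinuous_of_continuous hvc)
  exact isMinOn_iff.1 hmin (⟨w, hw⟩, ⟨z, hz⟩) h

/-- Polarizing a competitor of least second moment by a half-space containing the origin keeps it
a competitor, so it must leave the second moment unchanged. -/
lemma exists_radial [Nontrivial E] (huc : Continuous u) (hus : HasCompactSupport u)
    (hvc : Continuous v) (hvs : HasCompactSupport v)
    (hJ : IsConvexCost J) (hg : IsRadialKernel g)
    (hu : ∀ x, 0 ≤ u x) (hv : ∀ x, 0 ≤ v x) :
    ∃ w z, IsCompetitor J g u v w z ∧ (∀ x y, ‖x‖ < ‖y‖ → w y ≤ w x) ∧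
      ∀ x y, ‖x‖ < ‖y‖ → z y ≤ z x := by
  obtain ⟨w, z, h, hmin⟩ := exists_secondMoment_minimizer huc hus hvc hvs hJ.continuous
    hg.measurable hu hv
  have hw := h.inheritsBounds_left
  have hz := h.inheritsBounds_right
  have hwm := (hw.continuous (hus.uniformContinuous_of_continuous huc)).measurable
  have hzm := (hz.continuous (hvs.uniformContinuous_of_continuous hvc)).measurable
  have hmoment (H : HalfSpace E) (hH : 0 < H.height 0) :
      secondMoment w ≤ secondMoment (H.polarize w) ∧
        secondMoment z ≤ secondMoment (H.polarize z) := by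
    have hle := hmin _ _ (h.polarize hJ hg hwm hzm H hH.le)
    have hlew := H.secondMoment_polarize_le hH.le (hw.integrable huc hus)
      ((hw.polarize H hH.le).integrable huc hus)
    have hlez := H.secondMoment_polarize_le hH.le (hz.integrable hvc hvs)
      ((hz.polarize H hH.le).integrable hvc hvs)
    exact ⟨by linarith, by linarith⟩
  refine ⟨w, z, h, fun x y hxy => ?_, fun x y hxy => ?_⟩
  · exact HalfSpace.le_of_norm_sub_lt_of_reflect_le (a := 0) (fun H hH x hx =>
      H.reflect_le_of_secondMoment_le huc hus hw hH (hmoment H hH).1 hx) (by simpa using hxy)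
  · exact HalfSpace.le_of_norm_sub_lt_of_reflect_le (a := 0) (fun H hH x hx =>
      H.reflect_le_of_secondMoment_le hvc hvs hz hH (hmoment H hH).2 hx) (by simpa using hxy)

end IsCompetitor

end Competitor

section RieszCompactSupport

variable {n : ℕ} [NeZero n] {J : ℝ → ℝ} {g u v w : EuclideanSpace ℝ (Fin n) → ℝ}

lemma schwarzRearr_eq_of_radial (hw : IsRearrangeable w) (hwc : Continuous w)
    (hrad : ∀ x y, ‖x‖ < ‖y‖ → w y ≤ w x) {x : EuclideanSpace ℝ (Fin n)} (hx : x ≠ 0) :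
    schwarzRearr n w x = w x := by
  refine eq_of_forall_pos_rat_lt_iff (schwarzRearr_nonneg w x) (hw.nonneg x) fun t ht => ?_
  rw [lt_schwarzRearr_iff hw hx ht]
  refine ⟨fun hvol => ?_, fun htx => ?_⟩
  · by_contra! hle
    have hsub : {y | t < w y} ⊆ Metric.closedBall 0 ‖x‖ := fun y hy =>
      mem_closedBall_zero_iff.2 (le_of_not_gt fun hxy => hy.not_ge ((hrad x y hxy).trans hle))
    rw [← Measure.addHaar_closedBall_eq_addHaar_ball] at hvol
    exact (measure_mono hsub).not_gt hvol
  · have hray : Tendsto (fun η : ℝ => w ((1 + η) • x)) (𝓝[>] 0) (𝓝 (w x)) := by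
      have hcont : Continuous fun η : ℝ => w ((1 + η) • x) := by fun_prop
      simpa using (hcont.tendsto 0).mono_left nhdsWithin_le_nhds
    obtain ⟨η, htη, hη⟩ := ((hray.eventually_const_lt htx).and self_mem_nhdsWithin).exists
    have : 0 < η := hη
    have hnorm : ‖x‖ < ‖(1 + η) • x‖ := by
      rw [norm_smul, Real.norm_of_nonneg (by positivity)]
      nlinarith [norm_pos_iff.2 hx]
    calc volume (Metric.ball (0 : EuclideanSpace ℝ (Fin n)) ‖x‖)
        < volume (Metric.ball (0 : EuclideanSpace ℝ (Fin n)) ‖(1 + η) • x‖) :=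
          (volume_ball_lt_volume_ball_iff 0 0 (norm_nonneg _) (norm_nonneg _)).2 hnorm
      _ ≤ volume {y | t < w y} := measure_mono fun y hy =>
          htη.trans_le (hrad y _ (mem_ball_zero_iff.1 hy))

lemma energy_schwarzRearr_le_of_hasCompactSupport (hJ : IsConvexCost J) (hg : IsRadialKernel g)
    (huc : Continuous u) (hu : ∀ x, 0 ≤ u x) (hus : HasCompactSupport u)
    (hvc : Continuous v) (hv : ∀ x, 0 ≤ v x) (hvs : HasCompactSupport v) :
    energy J g (schwarzRearr n u) (schwarzRearr n v) ≤ energy J g u v := by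
  obtain ⟨w, z, h, hw_rad, hz_rad⟩ := IsCompetitor.exists_radial huc hus hvc hvs hJ hg hu hv
  have hw := h.inheritsBounds_left
  have hz := h.inheritsBounds_right
  rw [← schwarzRearr_congr hw.nonneg hu h.equimeasurable_left,
    ← schwarzRearr_congr hz.nonneg hv h.equimeasurable_right]
  have hw_eq : schwarzRearr n w =ᵐ[volume] w := (Measure.ae_ne volume 0).mono fun x hx =>
    schwarzRearr_eq_of_radial (hw.isRearrangeable huc hus)
      (hw.continuous (hus.uniformContinuous_of_continuous huc)) hw_rad hx
  have hz_eq : schwarzRearr n z =ᵐ[volume] z := (Measure.ae_ne volume 0).mono fun x hx =>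
    schwarzRearr_eq_of_radial (hz.isRearrangeable hvc hvs)
      (hz.continuous (hvs.uniformContinuous_of_continuous hvc)) hz_rad hx
  rw [energy_congr_ae hw_eq hz_eq]
  exact h.energy_le

end RieszCompactSupport

section ConvergenceInMeasure

variable {α : Type*} [MeasureSpace α] {u w : α → ℝ} {W : ℕ → α → ℝ} {s t : ℝ} {c : ℝ≥0∞}

lemma volume_lt_le_add (u w : α → ℝ) (s t : ℝ) :
    volume {x | t < u x} ≤ volume {x | s < w x} + volume {x | t - s ≤ dist (w x) (u x)} := by
  refine (measure_mono fun x hx => ?_).trans (measure_union_le _ _)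
  simp only [mem_union, mem_ofPred_eq, Real.dist_eq] at hx ⊢
  refine or_iff_not_imp_left.2 fun hw => ?_
  linarith [neg_le_abs (w x - u x)]

lemma eventually_lt_volume_of_tendstoInMeasure (h : TendstoInMeasure volume W atTop u)
    (hst : s < t) (hc : c < volume {x | t < u x}) : ∀ᶠ k in atTop, c < volume {x | s < W k x} := by
  have hlim := (tendstoInMeasure_iff_dist.1 h (t - s) (sub_pos.2 hst)).const_add c
  rw [add_zero] at hlim
  filter_upwards [hlim.eventually_lt_const hc] with k hk
  exact lt_of_add_lt_add_right (hk.trans_le (volume_lt_le_add u (W k) s t))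

lemma eventually_volume_lt_of_tendstoInMeasure (h : TendstoInMeasure volume W atTop u)
    (hst : s < t) (hc : volume {x | s < u x} < c) : ∀ᶠ k in atTop, volume {x | t < W k x} < c := by
  have hlim := (tendstoInMeasure_iff_dist.1 h (t - s) (sub_pos.2 hst)).const_add
    (volume {x | s < u x})
  rw [add_zero] at hlim
  filter_upwards [hlim.eventually_lt_const hc] with k hk
  simp only [dist_comm (W k _)] at hk
  exact (volume_lt_le_add (W k) u s t).trans_lt hk

lemma tendstoInMeasure_of_tendsto_lintegral (hW : ∀ k, Measurable (W k)) (hu : Measurable u)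
    (h : Tendsto (fun k => ∫⁻ x, ‖W k x - u x‖ₑ) atTop (𝓝 0)) :
    TendstoInMeasure volume W atTop u := by
  refine tendstoInMeasure_of_tendsto_eLpNorm one_ne_zero (fun k => (hW k).aestronglyMeasurable)
    hu.aestronglyMeasurable ?_
  simpa only [eLpNorm_one_eq_lintegral_enorm, Pi.sub_apply] using h

end ConvergenceInMeasure

section ConvergenceOfRearrangements

variable {n : ℕ} [NeZero n] {u : EuclideanSpace ℝ (Fin n) → ℝ}

lemma ae_forall_rat_volume_ball_ne (hu : IsRearrangeable u) :
    ∀ᵐ x : EuclideanSpace ℝ (Fin n), ∀ q : ℚ, 0 < (q : ℝ) →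
      volume (Metric.ball (0 : EuclideanSpace ℝ (Fin n)) ‖x‖) ≠ volume {y | (q : ℝ) < u y} := by
  refine ae_all_iff.2 fun q => ?_
  have hsphere : ∀ᵐ x : EuclideanSpace ℝ (Fin n),
      x ∉ Metric.sphere 0 (schwarzRadius n {y | (q : ℝ) < u y}) :=
    measure_eq_zero_iff_ae_notMem.1 (Measure.addHaar_sphere _ _ _)
  filter_upwards [hsphere] with x hx hq heq
  rw [← volume_ball_schwarzRadius 0 (hu.volume_lt_top q hq).ne] at heq
  refine hx (mem_sphere_zero_iff_norm.2 (le_antisymm ?_ ?_))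
  · exact not_lt.1 fun hlt => heq.not_gt
      ((volume_ball_lt_volume_ball_iff 0 0 (schwarzRadius_nonneg _) (norm_nonneg x)).2 hlt)
  · exact not_lt.1 fun hlt => heq.not_lt
      ((volume_ball_lt_volume_ball_iff 0 0 (norm_nonneg x) (schwarzRadius_nonneg _)).2 hlt)

lemma ae_tendsto_schwarzRearr {W : ℕ → EuclideanSpace ℝ (Fin n) → ℝ} (hu : IsRearrangeable u)
    (hW : ∀ k, IsRearrangeable (W k)) (h : TendstoInMeasure volume W atTop u) :
    ∀ᵐ x, Tendsto (fun k => schwarzRearr n (W k) x) atTop (𝓝 (schwarzRearr n u x)) := by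
  filter_upwards [ae_forall_rat_volume_ball_ne hu, Measure.ae_ne volume 0] with x hx hx0
  refine tendsto_order.2 ⟨fun a ha => ?_, fun b hb => ?_⟩
  · rcases lt_or_ge a 0 with ha0 | ha0
    · exact Eventually.of_forall fun k => ha0.trans_le (schwarzRearr_nonneg _ _)
    obtain ⟨s, has, hs⟩ := exists_between ha
    obtain ⟨t, hst, ht⟩ := exists_between hs
    rw [lt_schwarzRearr_iff hu hx0 (by linarith)] at ht
    filter_upwards [eventually_lt_volume_of_tendstoInMeasure h hst ht] with k hk
    exact has.trans ((lt_schwarzRearr_iff (hW k) hx0 (by linarith)).2 hk)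
  · obtain ⟨q, huq, hqb⟩ := exists_rat_btwn hb
    obtain ⟨t, hqt, htb⟩ := exists_between hqb
    have hq : 0 < (q : ℝ) := (schwarzRearr_nonneg u x).trans_lt huq
    have hlt : volume {y | (q : ℝ) < u y} <
        volume (Metric.ball (0 : EuclideanSpace ℝ (Fin n)) ‖x‖) :=
      lt_of_le_of_ne (not_lt.1 fun hlt => huq.not_gt ((lt_schwarzRearr_iff hu hx0 hq).2 hlt))
        (hx q hq).symm
    filter_upwards [eventually_volume_lt_of_tendstoInMeasure h hqt hlt] with k hk
    refine (not_lt.1 fun hlt => hk.not_gt ?_).trans_lt htb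
    exact (lt_schwarzRearr_iff (hW k) hx0 (hq.trans hqt)).1 hlt

end ConvergenceOfRearrangements

section EnergyContinuity

variable {E : Type*} [NormedAddCommGroup E] [InnerProductSpace ℝ E] [FiniteDimensional ℝ E]
  [MeasurableSpace E] [BorelSpace E] {J : ℝ → ℝ} {g u v w z : E → ℝ}

lemma lintegral_lintegral_mul_sub {f h : E → ℝ≥0∞} (hf : Measurable f) (hh : Measurable h) :
    ∫⁻ x, ∫⁻ y, f x * h (x - y) = (∫⁻ x, f x) * ∫⁻ x, h x := by
  rw [← lintegral_mul_const _ hf]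
  refine lintegral_congr fun x => ?_
  rw [lintegral_const_mul _ (by fun_prop), lintegral_sub_left_eq_self h x]

lemma lintegral_lintegral_mul_sub' {f h : E → ℝ≥0∞} (hf : Measurable f) (hh : Measurable h) :
    ∫⁻ x, ∫⁻ y, f y * h (x - y) = (∫⁻ y, f y) * ∫⁻ x, h x := by
  rw [lintegral_lintegral_swap (by fun_prop), ← lintegral_mul_const _ hf]
  refine lintegral_congr fun y => ?_
  rw [lintegral_const_mul _ (by fun_prop), lintegral_sub_right_eq_self h y]

lemma energyDensity_le_add {E : Type*} [NormedAddCommGroup E] {g u v w z : E → ℝ} {K : NNReal}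
    {S : Set ℝ} {p : E × E} (hJ : LipschitzOnWith K J S)
    (hg : ∀ x, 0 ≤ g x) (huv : u p.1 - v p.2 ∈ S) (hwz : w p.1 - z p.2 ∈ S) :
    energyDensity J g w z p ≤ energyDensity J g u v p +
      (K * ‖w p.1 - u p.1‖ₑ * ENNReal.ofReal (g (p.1 - p.2)) +
        K * ‖z p.2 - v p.2‖ₑ * ENNReal.ofReal (g (p.1 - p.2))) := by
  have hJ_le : J (w p.1 - z p.2) ≤
      J (u p.1 - v p.2) + K * |(w p.1 - u p.1) - (z p.2 - v p.2)| := by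
    have hdist := hJ.dist_le_mul _ hwz _ huv
    rw [Real.dist_eq, Real.dist_eq, sub_sub_sub_comm] at hdist
    linarith [le_abs_self (J (w p.1 - z p.2) - J (u p.1 - v p.2))]
  have henorm : ENNReal.ofReal (K * |(w p.1 - u p.1) - (z p.2 - v p.2)|) ≤
      K * ‖w p.1 - u p.1‖ₑ + K * ‖z p.2 - v p.2‖ₑ := by
    rw [ENNReal.ofReal_mul K.coe_nonneg, ENNReal.ofReal_coe_nnreal, ← Real.norm_eq_abs,
      ofReal_norm, ← mul_add]
    gcongr
    exact enorm_sub_le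
  unfold energyDensity
  rw [ENNReal.ofReal_mul' (hg _), ENNReal.ofReal_mul' (hg _), ← add_mul, ← add_mul]
  gcongr
  calc ENNReal.ofReal (J (w p.1 - z p.2))
      ≤ ENNReal.ofReal (J (u p.1 - v p.2) + K * |(w p.1 - u p.1) - (z p.2 - v p.2)|) :=
        ENNReal.ofReal_le_ofReal hJ_le
    _ ≤ _ := ENNReal.ofReal_add_le.trans (by gcongr)

lemma energy_le_add {K : NNReal} {S : Set ℝ} (hJ : LipschitzOnWith K J S)
    (hg : ∀ x, 0 ≤ g x) (hgm : Measurable g) (hu : Measurable u) (hv : Measurable v)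
    (hw : Measurable w) (hz : Measurable z) (huv : ∀ x y, u x - v y ∈ S)
    (hwz : ∀ x y, w x - z y ∈ S) :
    energy J g w z ≤ energy J g u v +
      K * ((∫⁻ x, ‖w x - u x‖ₑ) + ∫⁻ y, ‖z y - v y‖ₑ) * ∫⁻ x, ENNReal.ofReal (g x) := by
  calc energy J g w z
      ≤ ∫⁻ x, ∫⁻ y, (energyDensity J g u v (x, y) +
          (K * ‖w x - u x‖ₑ * ENNReal.ofReal (g (x - y)) +
            K * ‖z y - v y‖ₑ * ENNReal.ofReal (g (x - y)))) :=
        lintegral_mono fun x => lintegral_mono fun y =>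
          energyDensity_le_add (p := (x, y)) hJ hg (huv x y) (hwz x y)
    _ = energy J g u v + ((∫⁻ x, ∫⁻ y, K * ‖w x - u x‖ₑ * ENNReal.ofReal (g (x - y))) +
          ∫⁻ x, ∫⁻ y, K * ‖z y - v y‖ₑ * ENNReal.ofReal (g (x - y))) := by
        rw [← lintegral_add_left (by fun_prop), energy, ← lintegral_add_right _ (by fun_prop)]
        refine lintegral_congr fun x => ?_
        rw [lintegral_add_right _ (by fun_prop), lintegral_add_left (by fun_prop)]
        rfl
    _ = _ := by
        rw [lintegral_lintegral_mul_sub (h := fun x => ENNReal.ofReal (g x)) (by fun_prop)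
            (by fun_prop),
          lintegral_lintegral_mul_sub' (f := fun y => K * ‖z y - v y‖ₑ)
            (h := fun x => ENNReal.ofReal (g x)) (by fun_prop) (by fun_prop),
          lintegral_const_mul _ (by fun_prop), lintegral_const_mul _ (by fun_prop),
          ← add_mul, ← mul_add]

end EnergyContinuity

section BoundedRiesz

lemma exists_continuous_hasCompactSupport_lintegral_enorm_sub_le {α : Type*} [TopologicalSpace α]
    [NormalSpace α] [R1Space α] [WeaklyLocallyCompactSpace α] [MeasurableSpace α] [BorelSpace α]
    {μ : Measure α} [μ.Regular] {u : α → ℝ} {M : ℝ} (hM : 0 ≤ M) (hu : ∀ x, u x ∈ Icc 0 M)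
    (hui : Integrable u μ) {ε : ℝ≥0∞} (hε : ε ≠ 0) :
    ∃ w : α → ℝ, Continuous w ∧ HasCompactSupport w ∧ (∀ x, w x ∈ Icc 0 M) ∧
      ∫⁻ x, ‖w x - u x‖ₑ ∂μ ≤ ε := by
  obtain ⟨w, hws, hw, hwc, -⟩ := hui.exists_hasCompactSupport_lintegral_sub_le hε
  refine ⟨fun x => projIcc 0 M hM (w x), continuous_subtype_val.comp (continuous_projIcc.comp hwc),
    hws.comp_left (g := fun t => (projIcc 0 M hM t : ℝ)) (by simp),
    fun x => (projIcc 0 M hM (w x)).2, (lintegral_mono fun x => ?_).trans hw⟩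
  have hlip := (LipschitzWith.projIcc hM).edist_le_mul (u x) (w x)
  rw [projIcc_of_mem hM (hu x), Subtype.edist_eq, ENNReal.coe_one, one_mul,
    edist_comm, edist_eq_enorm_sub, edist_eq_enorm_sub] at hlip
  exact hlip

lemma exists_seq_hasCompactSupport_tendsto_lintegral_enorm_sub {α : Type*} [TopologicalSpace α]
    [NormalSpace α] [R1Space α] [WeaklyLocallyCompactSpace α] [MeasurableSpace α] [BorelSpace α]
    {μ : Measure α} [μ.Regular] {u : α → ℝ} {M : ℝ} (hM : 0 ≤ M) (hu : ∀ x, u x ∈ Icc 0 M)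
    (hui : Integrable u μ) :
    ∃ W : ℕ → α → ℝ, (∀ k, Continuous (W k)) ∧ (∀ k, HasCompactSupport (W k)) ∧
      (∀ k x, W k x ∈ Icc 0 M) ∧ Tendsto (fun k => ∫⁻ x, ‖W k x - u x‖ₑ ∂μ) atTop (𝓝 0) := by
  choose W hWc hWs hWM hWu using fun k : ℕ =>
    exists_continuous_hasCompactSupport_lintegral_enorm_sub_le hM hu hui (ε := (k : ℝ≥0∞)⁻¹)
      (by simp)
  exact ⟨W, hWc, hWs, hWM, tendsto_of_tendsto_of_tendsto_of_le_of_le tendsto_const_nhds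
    ENNReal.tendsto_inv_nat_nhds_zero (fun _ => zero_le) hWu⟩

variable {n : ℕ} [NeZero n] {J : ℝ → ℝ} {g u v : EuclideanSpace ℝ (Fin n) → ℝ}

lemma energy_schwarzRearr_le_of_integrable (hJ : IsConvexCost J) (hg : IsRadialKernel g)
    (hgi : Integrable g) {M : ℝ} (hM : 0 ≤ M) (hu : IsRearrangeable u) (hv : IsRearrangeable v)
    (huM : ∀ x, u x ≤ M) (hvM : ∀ x, v x ≤ M) (hui : Integrable u) (hvi : Integrable v) :
    energy J g (schwarzRearr n u) (schwarzRearr n v) ≤ energy J g u v := by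
  obtain ⟨K, hK⟩ := (hJ.convexOn.locallyLipschitz.locallyLipschitzOn
    (s := Icc (-M) M)).exists_lipschitzOnWith_of_compact isCompact_Icc
  obtain ⟨W, hWc, hWs, hWM, hWu⟩ := exists_seq_hasCompactSupport_tendsto_lintegral_enorm_sub hM
    (fun x => ⟨hu.nonneg x, huM x⟩) hui
  obtain ⟨Z, hZc, hZs, hZM, hZv⟩ := exists_seq_hasCompactSupport_tendsto_lintegral_enorm_sub hM
    (fun x => ⟨hv.nonneg x, hvM x⟩) hvi
  have hW (k : ℕ) : IsRearrangeable (W k) :=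
    (InheritsBounds.refl fun x => (hWM k x).1).isRearrangeable (hWc k) (hWs k)
  have hZ (k : ℕ) : IsRearrangeable (Z k) :=
    (InheritsBounds.refl fun x => (hZM k x).1).isRearrangeable (hZc k) (hZs k)
  have hsub {a b : ℝ} (ha : a ∈ Icc 0 M) (hb : b ∈ Icc 0 M) : a - b ∈ Icc (-M) M :=
    ⟨by linarith [ha.1, hb.2], by linarith [ha.2, hb.1]⟩
  have herr : Tendsto (fun k => energy J g u v + K * ((∫⁻ x, ‖W k x - u x‖ₑ) +
      ∫⁻ x, ‖Z k x - v x‖ₑ) * ∫⁻ x, ENNReal.ofReal (g x)) atTop (𝓝 (energy J g u v)) := by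
    have hlim := (ENNReal.Tendsto.mul_const (ENNReal.Tendsto.const_mul (a := K) (hWu.add hZv)
      (Or.inr ENNReal.coe_ne_top)) (Or.inr hgi.lintegral_lt_top.ne)).const_add (energy J g u v)
    simpa only [add_zero, mul_zero, zero_mul] using hlim
  refine energy_le_of_tendsto hJ.continuous (fun _ => hg.measurable)
    (fun k => measurable_schwarzRearr (hW k)) (fun k => measurable_schwarzRearr (hZ k))
    hg.measurable (measurable_schwarzRearr hu) (measurable_schwarzRearr hv)
    (fun _ => tendsto_const_nhds)
    (ae_tendsto_schwarzRearr hu hW (tendstoInMeasure_of_tendsto_lintegral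
      (fun k => (hW k).measurable) hu.measurable hWu))
    (ae_tendsto_schwarzRearr hv hZ (tendstoInMeasure_of_tendsto_lintegral
      (fun k => (hZ k).measurable) hv.measurable hZv)) (fun k => ?_) herr
  exact (energy_schwarzRearr_le_of_hasCompactSupport hJ hg (hWc k) (hW k).nonneg (hWs k) (hZc k)
    (hZ k).nonneg (hZs k)).trans (energy_le_add hK hg.nonneg hg.measurable hu.measurable
      hv.measurable (hW k).measurable (hZ k).measurable
      (fun x y => hsub ⟨hu.nonneg x, huM x⟩ ⟨hv.nonneg y, hvM y⟩)
      fun x y => hsub (hWM k x) (hZM k y))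

end BoundedRiesz

section Truncation

/-- The part of the number `s` lying between the heights `c` and `c + M`. -/
noncomputable def truncate (c M s : ℝ) : ℝ := min (max (s - c) 0) M

variable {c M : ℝ}

lemma lt_truncate_iff {s t : ℝ} (ht : 0 ≤ t) : t < truncate c M s ↔ t < M ∧ t + c < s := by
  rw [truncate, lt_min_iff, lt_max_iff, or_iff_left ht.not_gt, lt_sub_iff_add_lt, and_comm]

lemma truncate_nonneg (hM : 0 ≤ M) (s : ℝ) : 0 ≤ truncate c M s := le_min (le_max_right _ _) hM

lemma truncate_le (s : ℝ) : truncate c M s ≤ M := min_le_right _ _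

lemma continuous_truncate : Continuous (truncate c M) := by
  unfold truncate
  fun_prop

lemma monotone_truncate : Monotone (truncate c M) := by
  intro a b h
  unfold truncate
  gcongr

lemma truncate_sub_truncate_mem_uIcc (a b : ℝ) :
    truncate c M b - truncate c M a ∈ uIcc 0 (b - a) := by
  have habs : |truncate c M b - truncate c M a| ≤ |b - a| := by
    have hmin := abs_min_sub_min_le_max (max (b - c) 0) M (max (a - c) 0) M
    rw [sub_self, abs_zero, max_eq_left (abs_nonneg (max (b - c) 0 - max (a - c) 0))] at hmin
    have hmax := abs_max_sub_max_le_abs (b - c) (a - c) 0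
    rw [sub_sub_sub_cancel_right] at hmax
    exact hmin.trans hmax
  rcases le_total a b with hab | hab
  · rw [abs_of_nonneg (sub_nonneg.2 (monotone_truncate hab)), abs_of_nonneg (sub_nonneg.2 hab)]
      at habs
    exact mem_uIcc_of_le (sub_nonneg.2 (monotone_truncate hab)) habs
  · rw [abs_of_nonpos (sub_nonpos.2 (monotone_truncate hab)), abs_of_nonpos (sub_nonpos.2 hab)]
      at habs
    exact mem_uIcc_of_ge (neg_le_neg_iff.1 habs) (sub_nonpos.2 (monotone_truncate hab))

lemma tendsto_truncate {s : ℝ} (hs : 0 ≤ s) :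
    Tendsto (fun k : ℕ => truncate (1 / ((k : ℝ) + 1)) k s) atTop (𝓝 s) := by
  have hlim : Tendsto (fun k : ℕ => max (s - 1 / ((k : ℝ) + 1)) 0) atTop (𝓝 s) := by
    simpa [hs] using ((tendsto_one_div_add_atTop_nhds_zero_nat (𝕜 := ℝ)).const_sub s).max
      (tendsto_const_nhds (x := 0))
  refine hlim.congr' ?_
  filter_upwards [tendsto_natCast_atTop_atTop.eventually_ge_atTop s] with k hk
  have hk' : 0 < 1 / ((k : ℝ) + 1) := by positivity
  exact (min_eq_left (max_le (by linarith) (by positivity))).symm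

lemma IsRearrangeable.comp_truncate {α : Type*} [MeasureSpace α] {u : α → ℝ}
    (hu : IsRearrangeable u) (hc : 0 ≤ c) (hM : 0 ≤ M) :
    IsRearrangeable fun x => truncate c M (u x) where
  measurable := continuous_truncate.measurable.comp hu.measurable
  nonneg x := truncate_nonneg hM (u x)
  volume_lt_top t ht := (measure_mono fun _ hx => ((lt_truncate_iff ht.le).1 hx).2).trans_lt
    (hu.volume_lt_top (t + c) (by positivity))

lemma IsRearrangeable.integrable_truncate {α : Type*} [MeasureSpace α] {u : α → ℝ}
    (hu : IsRearrangeable u) (hc : 0 < c) (hM : 0 ≤ M) :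
    Integrable fun x => truncate c M (u x) := by
  have hsupp : (Function.support fun x => truncate c M (u x)) ⊆ {x | c < u x} := by
    intro x hx
    have hpos := (truncate_nonneg hM (u x)).lt_of_ne' hx
    rw [lt_truncate_iff le_rfl, zero_add] at hpos
    exact hpos.2
  rw [← integrableOn_iff_integrable_of_support_subset hsupp]
  refine Measure.integrableOn_of_bounded (hu.volume_lt_top c hc).ne
    (hu.comp_truncate hc.le hM).measurable.aestronglyMeasurable (M := M) (ae_of_all _ fun x => ?_)
  rw [Real.norm_eq_abs, abs_of_nonneg (truncate_nonneg hM _)]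
  exact truncate_le _

lemma schwarzRearr_truncate {n : ℕ} [NeZero n] {u : EuclideanSpace ℝ (Fin n) → ℝ}
    (hu : IsRearrangeable u) (hc : 0 ≤ c) (hM : 0 ≤ M) {x : EuclideanSpace ℝ (Fin n)}
    (hx : x ≠ 0) :
    schwarzRearr n (fun x => truncate c M (u x)) x = truncate c M (schwarzRearr n u x) := by
  refine eq_of_forall_pos_rat_lt_iff (schwarzRearr_nonneg _ _) (truncate_nonneg hM _) fun t ht => ?_
  rw [lt_schwarzRearr_iff (hu.comp_truncate hc hM) hx ht, lt_truncate_iff ht.le,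
    lt_schwarzRearr_iff hu hx (by positivity)]
  simp only [lt_truncate_iff ht.le]
  by_cases htM : t < M <;> simp [htM]

end Truncation

section TruncatedKernel

variable {E : Type*} [NormedAddCommGroup E] {g : E → ℝ} {k : ℕ}

/-- The kernel `g` cut off at height `k` and outside the ball of radius `k`. -/
noncomputable def truncateKernel (k : ℕ) (g : E → ℝ) : E → ℝ :=
  (Metric.closedBall 0 k).indicator fun x => min (g x) k

lemma truncateKernel_le (hg : ∀ x, 0 ≤ g x) (x : E) : truncateKernel k g x ≤ g x :=
  indicator_apply_le' (fun _ => min_le_left _ _) fun _ => hg x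

lemma truncateKernel_nonneg (hg : ∀ x, 0 ≤ g x) (x : E) : 0 ≤ truncateKernel k g x :=
  indicator_nonneg (fun x _ => le_min (hg x) k.cast_nonneg) x

lemma tendsto_truncateKernel (g : E → ℝ) (x : E) :
    Tendsto (fun k => truncateKernel k g x) atTop (𝓝 (g x)) := by
  refine tendsto_const_nhds.congr' ?_
  filter_upwards [tendsto_natCast_atTop_atTop.eventually_ge_atTop (g x),
    tendsto_natCast_atTop_atTop.eventually_ge_atTop ‖x‖] with k hgk hxk
  rw [truncateKernel, indicator_of_mem (mem_closedBall_zero_iff.2 hxk), min_eq_left hgk]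

lemma isRadialKernel_truncateKernel [MeasurableSpace E] [OpensMeasurableSpace E]
    (hg : IsRadialKernel g) : IsRadialKernel (truncateKernel k g) where
  nonneg := truncateKernel_nonneg hg.nonneg
  measurable := (hg.measurable.min measurable_const).indicator measurableSet_closedBall
  le_of_norm_le x y hx hxy := by
    refine indicator_apply_le' (fun hy => ?_)
      fun _ => truncateKernel_nonneg hg.nonneg x
    rw [truncateKernel, indicator_of_mem
      (mem_closedBall_zero_iff.2 (hxy.trans (mem_closedBall_zero_iff.1 hy)))]
    exact min_le_min_right _ (hg.le_of_norm_le x y hx hxy)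

lemma integrable_truncateKernel [MeasureSpace E] [OpensMeasurableSpace E] [ProperSpace E]
    [IsFiniteMeasureOnCompacts (volume : Measure E)] (hg : IsRadialKernel g) :
    Integrable (truncateKernel k g) := by
  rw [truncateKernel, integrable_indicator_iff measurableSet_closedBall]
  refine Measure.integrableOn_of_bounded measure_closedBall_lt_top.ne
    (hg.measurable.min measurable_const).aestronglyMeasurable (M := k) (ae_of_all _ fun x => ?_)
  rw [Real.norm_eq_abs, abs_of_nonneg (le_min (hg.nonneg x) k.cast_nonneg)]
  exact min_le_right _ _

end TruncatedKernel

section RieszInequality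

lemma IsConvexCost.le_of_mem_uIcc {J : ℝ → ℝ} (hJ : IsConvexCost J) {p q : ℝ}
    (h : p ∈ uIcc 0 q) : J p ≤ J q := by
  refine (hJ.convexOn.le_on_segment (mem_univ 0) (mem_univ q) (segment_eq_uIcc 0 q ▸ h)).trans ?_
  rw [hJ.map_zero, max_eq_right (hJ.nonneg q)]

lemma energy_truncate_le {E : Type*} [NormedAddCommGroup E] [MeasureSpace E] {J : ℝ → ℝ}
    {g u v : E → ℝ} {c M : ℝ} (hJ : IsConvexCost J) (hg : ∀ x, 0 ≤ g x) (k : ℕ) :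
    energy J (truncateKernel k g) (fun x => truncate c M (u x)) (fun y => truncate c M (v y)) ≤
      energy J g u v :=
  lintegral_mono fun _ => lintegral_mono fun _ => ENNReal.ofReal_le_ofReal
    (mul_le_mul (hJ.le_of_mem_uIcc (truncate_sub_truncate_mem_uIcc _ _)) (truncateKernel_le hg _)
      (truncateKernel_nonneg hg _) (hJ.nonneg _))

variable {n : ℕ} [NeZero n] {J : ℝ → ℝ} {g u v : EuclideanSpace ℝ (Fin n) → ℝ}

lemma ae_tendsto_schwarzRearr_truncate (hu : IsRearrangeable u) :
    ∀ᵐ x, Tendsto (fun k : ℕ => schwarzRearr n (fun x => truncate (1 / ((k : ℝ) + 1)) k (u x)) x)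
      atTop (𝓝 (schwarzRearr n u x)) := by
  filter_upwards [Measure.ae_ne volume 0] with x hx
  refine (tendsto_truncate (schwarzRearr_nonneg u x)).congr fun k => ?_
  rw [schwarzRearr_truncate hu (by positivity) k.cast_nonneg hx]

theorem energy_schwarzRearr_le (hJ : IsConvexCost J) (hg : IsRadialKernel g)
    (hu : IsRearrangeable u) (hv : IsRearrangeable v) :
    energy J g (schwarzRearr n u) (schwarzRearr n v) ≤ energy J g u v := by
  have hc (k : ℕ) : 0 < 1 / ((k : ℝ) + 1) := by positivity
  have hT {u : EuclideanSpace ℝ (Fin n) → ℝ} (hu : IsRearrangeable u) (k : ℕ) :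
      IsRearrangeable fun x => truncate (1 / ((k : ℝ) + 1)) k (u x) :=
    hu.comp_truncate (hc k).le k.cast_nonneg
  refine energy_le_of_tendsto hJ.continuous
    (fun k => (isRadialKernel_truncateKernel (k := k) hg).measurable)
    (fun k => measurable_schwarzRearr (hT hu k)) (fun k => measurable_schwarzRearr (hT hv k))
    hg.measurable (measurable_schwarzRearr hu) (measurable_schwarzRearr hv)
    (tendsto_truncateKernel g) (ae_tendsto_schwarzRearr_truncate hu)
    (ae_tendsto_schwarzRearr_truncate hv) (fun k => ?_) tendsto_const_nhds
  exact (energy_schwarzRearr_le_of_integrable hJ (isRadialKernel_truncateKernel hg)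
    (integrable_truncateKernel hg) k.cast_nonneg (hT hu k) (hT hv k) (fun _ => truncate_le _)
    (fun _ => truncate_le _) (hu.integrable_truncate (hc k) k.cast_nonneg)
    (hv.integrable_truncate (hc k) k.cast_nonneg)).trans (energy_truncate_le hJ hg.nonneg k)

end RieszInequality

/-- Reflecting in two distinct parallel hyperplanes is a nonzero translation. -/
lemma HalfSpace.eq_offset_of_comp_reflect_eq {E : Type*} [NormedAddCommGroup E]
    [InnerProductSpace ℝ E] [FiniteDimensional ℝ E] {f : E → ℝ}
    (hlim : Tendsto f (cocompact E) (𝓝 0)) {x : E} (hx : f x ≠ 0)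
    {H₁ H₂ : HalfSpace E} (hnormal : H₁.normal = H₂.normal)
    (h₁ : ∀ y, f (H₁.reflect y) = f y) (h₂ : ∀ y, f (H₂.reflect y) = f y) :
    H₁.offset = H₂.offset := by
  by_contra hne
  let c := (2 * (H₂.offset - H₁.offset)) • H₁.normal
  have hc : c ≠ 0 := by
    refine smul_ne_zero (mul_ne_zero two_ne_zero (sub_ne_zero.2 (Ne.symm hne))) ?_
    exact norm_ne_zero_iff.1 (H₁.norm_normal ▸ one_ne_zero)
  have hshift (y : E) : H₂.reflect (H₁.reflect y) = y + c := by
    have hheight : H₂.height (H₁.reflect y) = -H₁.height y + (H₁.offset - H₂.offset) := by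
      rw [← height_reflect]
      simp only [height, hnormal]
      ring
    rw [reflect, hheight, ← hnormal, reflect]
    module
  have hperiodic (k : ℕ) : f (x + k • c) = f x := by
    induction k with
    | zero => simp
    | succ k ih => rw [succ_nsmul, ← add_assoc, ← hshift, h₂, h₁, ih]
  have hescape : Tendsto (fun k : ℕ => x + k • c) atTop (cocompact E) := by
    rw [← Metric.cobounded_eq_cocompact, ← tendsto_norm_atTop_iff_cobounded]
    refine tendsto_atTop_mono (fun k => ?_) (tendsto_atTop_add_const_right _ (-‖x‖)
      (tendsto_natCast_atTop_atTop.atTop_mul_const (norm_pos_iff.2 hc)))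
    have h := norm_sub_le (x + k • c) x
    rw [add_sub_cancel_left, RCLike.norm_nsmul ℝ, nsmul_eq_mul] at h
    linarith
  exact hx (tendsto_nhds_unique tendsto_const_nhds ((hlim.comp hescape).congr hperiodic))

section Potential
variable {E : Type*} [NormedAddCommGroup E] [InnerProductSpace ℝ E] [FiniteDimensional ℝ E]
  [MeasurableSpace E] [BorelSpace E] {K : ℝ → ℝ} {A B : Set E}

/-- The potential of `A` generated by the radial kernel with profile `K`. -/
noncomputable def potential (K : ℝ → ℝ) (A : Set E) (x : E) : ℝ := ∫ y in A, K ‖x - y‖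

lemma abs_le_of_antitone (hK : Antitone K) (hK0 : ∀ t, 0 ≤ K t) {t : ℝ} (ht : 0 ≤ t) :
    |K t| ≤ K 0 := by
  rw [abs_of_nonneg (hK0 t)]
  exact hK ht

lemma integrableOn_radial (hK : Antitone K) (hK0 : ∀ t, 0 ≤ K t) (hA : volume A ≠ ⊤) (x : E) :
    IntegrableOn (fun y => K ‖x - y‖) A := by
  have hmeas := hK.measurable
  exact IntegrableOn.of_bound hA.lt_top (Measurable.aestronglyMeasurable (by fun_prop)) (K 0)
    (Eventually.of_forall fun _ => abs_le_of_antitone hK hK0 (norm_nonneg _))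

lemma continuous_potential (hK : Antitone K) (hK0 : ∀ t, 0 ≤ K t) (hKc : Continuous K)
    (hA : volume A ≠ ⊤) : Continuous (potential K A) :=
  continuous_of_dominated (bound := fun _ => K 0)
    (fun x => (integrableOn_radial hK hK0 hA x).aestronglyMeasurable)
    (fun _ => Eventually.of_forall fun _ => abs_le_of_antitone hK hK0 (norm_nonneg _))
    (integrableOn_const hA) (Eventually.of_forall fun _ => by fun_prop)

lemma tendsto_potential_cocompact (hK : Antitone K) (hK0 : ∀ t, 0 ≤ K t)
    (hKlim : Tendsto K atTop (𝓝 0)) (hA : volume A ≠ ⊤) :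
    Tendsto (potential K A) (cocompact E) (𝓝 0) := by
  rw [← integral_zero E ℝ (μ := volume.restrict A), ← Metric.cobounded_eq_cocompact,
    ← comap_norm_atTop]
  refine tendsto_integral_filter_of_dominated_convergence (fun _ => K 0)
    (Eventually.of_forall fun x => (integrableOn_radial hK hK0 hA x).aestronglyMeasurable)
    (Eventually.of_forall fun _ => Eventually.of_forall fun _ =>
      abs_le_of_antitone hK hK0 (norm_nonneg _))
    (integrableOn_const hA) (Eventually.of_forall fun y => hKlim.comp ?_)
  refine tendsto_atTop_mono (fun x => norm_sub_norm_le x y) ?_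
  exact tendsto_atTop_add_const_right _ (-‖y‖) tendsto_comap

lemma potential_indicator_Iic (A : Set E) (r : ℝ) (x : E) :
    potential ((Iic r).indicator 1) A x = volume.real (A ∩ Metric.closedBall x r) := by
  have hball : (fun y => (Iic r).indicator (1 : ℝ → ℝ) ‖x - y‖) =
      (Metric.closedBall x r).indicator 1 := by
    funext y
    simp only [indicator, mem_Iic, Metric.mem_closedBall, dist_eq_norm', Pi.one_apply]
  rw [potential, hball, integral_indicator_one measurableSet_closedBall, measureReal_restrict_apply
    measurableSet_closedBall, inter_comm]

namespace HalfSpace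

variable (H : HalfSpace E)

/-- `A` is polarized towards `H`: up to a null set, every point of `A` outside `H` has its mirror
image in `A`. -/
def Polarizes (A : Set E) : Prop :=
  ∀ᵐ y, y ∈ A → H.reflect y ∉ A → 0 ≤ H.height y

variable {H}

lemma potential_sub_potential_reflect (hK : Antitone K) (hK0 : ∀ t, 0 ≤ K t)
    (hA : MeasurableSet A) (hfin : volume A ≠ ⊤) (x : E) :
    potential K A x - potential K A (H.reflect x) =
      ∫ y in A \ H.reflect ⁻¹' A, (K ‖x - y‖ - K ‖H.reflect x - y‖) := by
  let S := A ∩ H.reflect ⁻¹' A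
  let d := fun y => K ‖x - y‖ - K ‖H.reflect x - y‖
  have hint := integrableOn_radial hK hK0 hfin
  have hS : H.reflect ⁻¹' S = S := by
    ext y
    simp [S, and_comm]
  have hodd (y : E) : d (H.reflect y) = -d y := by
    simp only [d, H.norm_reflect_sub_reflect, ← H.norm_reflect_sub x y]
    ring
  have hSint : ∫ y in S, d y = 0 := by
    have h := H.measurePreserving_reflect.setIntegral_preimage_emb H.measurableEmbedding_reflect d S
    simp only [hS, hodd, integral_neg] at h
    linarith
  have hsplit := integral_inter_add_sdiff (f := d) (H.continuous_reflect.measurable hA)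
    ((hint x).sub (hint (H.reflect x)))
  calc potential K A x - potential K A (H.reflect x) = ∫ y in A, d y :=
        (integral_sub (hint x) (hint (H.reflect x))).symm
    _ = ∫ y in A \ H.reflect ⁻¹' A, d y := by rw [← hsplit, hSint, zero_add]

lemma Polarizes.ae_restrict_height_nonneg (h : H.Polarizes A) (hA : MeasurableSet A) :
    ∀ᵐ y ∂volume.restrict (A \ H.reflect ⁻¹' A), 0 ≤ H.height y := by
  rw [ae_restrict_iff' (hA.diff (H.continuous_reflect.measurable hA))]
  filter_upwards [h] with y hy hmem
  exact hy hmem.1 hmem.2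

lemma Polarizes.ae_restrict_sub_nonneg (h : H.Polarizes A) (hK : Antitone K)
    (hA : MeasurableSet A) {x : E} (hx : 0 ≤ H.height x) :
    ∀ᵐ y ∂volume.restrict (A \ H.reflect ⁻¹' A), 0 ≤ K ‖x - y‖ - K ‖H.reflect x - y‖ := by
  filter_upwards [h.ae_restrict_height_nonneg hA] with y hy
  rw [H.norm_reflect_sub]
  exact sub_nonneg.2 (hK (H.norm_sub_le_norm_sub_reflect_iff.2 (mul_nonneg hx hy)))

lemma Polarizes.potential_reflect_le (h : H.Polarizes A) (hK : Antitone K) (hK0 : ∀ t, 0 ≤ K t)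
    (hA : MeasurableSet A) (hfin : volume A ≠ ⊤) {x : E} (hx : 0 ≤ H.height x) :
    potential K A (H.reflect x) ≤ potential K A x := by
  rw [← sub_nonneg, potential_sub_potential_reflect hK hK0 hA hfin]
  exact setIntegral_nonneg_of_ae_restrict (h.ae_restrict_sub_nonneg hK hA hx)

lemma Polarizes.opp_of_potential_le (h : H.Polarizes A) (hK : StrictAnti K) (hK0 : ∀ t, 0 ≤ K t)
    (hA : MeasurableSet A) (hfin : volume A ≠ ⊤) {x : E} (hx : 0 < H.height x)
    (hle : potential K A x ≤ potential K A (H.reflect x)) : H.opp.Polarizes A := by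
  have hdiff := potential_sub_potential_reflect (H := H) hK.antitone hK0 hA hfin x
  have hnonneg := h.ae_restrict_sub_nonneg hK.antitone hA hx.le
  have hint := integrableOn_radial hK.antitone hK0 hfin
  have hzero := (setIntegral_eq_zero_iff_of_nonneg_ae hnonneg
    (((hint x).sub (hint (H.reflect x))).mono_set sdiff_subset)).1
    (le_antisymm (hdiff ▸ sub_nonpos.2 hle) (setIntegral_nonneg_of_ae_restrict hnonneg))
  have hmeas := hA.diff (H.continuous_reflect.measurable hA)
  filter_upwards [(ae_restrict_iff' hmeas).1 hzero] with y hy hyA hyR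
  rw [reflect_opp] at hyR
  rw [height_opp, neg_nonneg]
  by_contra! hpos
  have hlt := hK (H.norm_sub_lt_norm_sub_reflect_iff.2 (mul_pos hx hpos))
  have heq : K ‖x - y‖ - K ‖H.reflect x - y‖ = 0 := hy ⟨hyA, hyR⟩
  rw [H.norm_reflect_sub] at heq
  linarith

lemma Polarizes.potential_reflect (h : H.Polarizes A) (hopp : H.opp.Polarizes A)
    (hK : Antitone K) (hK0 : ∀ t, 0 ≤ K t) (hA : MeasurableSet A) (hfin : volume A ≠ ⊤) (x : E) :
    potential K A (H.reflect x) = potential K A x := by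
  have hle {y : E} (hy : 0 ≤ H.height y) : potential K A (H.reflect y) = potential K A y := by
    refine (h.potential_reflect_le hK hK0 hA hfin hy).antisymm ?_
    have h' := hopp.potential_reflect_le hK hK0 hA hfin (x := H.reflect y)
      (by rwa [height_opp, height_reflect, neg_neg])
    rwa [reflect_opp, reflect_reflect] at h'
  rcases le_total 0 (H.height x) with hx | hx
  · exact hle hx
  · simpa using (hle (y := H.reflect x) (by rw [height_reflect]; linarith)).symm

end HalfSpace

/-- For every half-space, `A` is polarized towards it or `B` towards its complement. -/
def Compatible (A B : Set E) : Prop :=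
  ∀ H : HalfSpace E, H.Polarizes A ∨ H.opp.Polarizes B

lemma Compatible.symm (h : Compatible A B) : Compatible B A := fun H => by
  simpa only [HalfSpace.opp_opp] using (h H.opp).symm

/-- `a` maximizes the potential of `A` for the profile `exp (-t)`; any other continuous, strictly
decreasing profile vanishing at infinity would do. -/
def IsCenter (A : Set E) (a : E) : Prop :=
  ∀ x, potential (fun t => exp (-t)) A x ≤ potential (fun t => exp (-t)) A a

lemma strictAnti_exp_neg : StrictAnti fun t : ℝ => exp (-t) :=
  fun _ _ h => exp_lt_exp.2 (neg_lt_neg h)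

lemma tendsto_potential_exp_neg_cocompact (hfin : volume A ≠ ⊤) :
    Tendsto (potential (fun t => exp (-t)) A) (cocompact E) (𝓝 0) :=
  tendsto_potential_cocompact strictAnti_exp_neg.antitone (fun _ => (exp_pos _).le)
    tendsto_exp_neg_atTop_nhds_zero hfin

lemma potential_exp_neg_pos (hfin : volume A ≠ ⊤) (hA0 : volume A ≠ 0) (x : E) :
    0 < potential (fun t => exp (-t)) A x := by
  have : NeZero (volume.restrict A) := ⟨Measure.restrict_eq_zero.not.2 hA0⟩
  exact integral_exp_pos
    (integrableOn_radial strictAnti_exp_neg.antitone (fun _ => (exp_pos _).le) hfin x)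

lemma exists_isCenter (hfin : volume A ≠ ⊤) (hA0 : volume A ≠ 0) : ∃ a, IsCenter A a := by
  refine (continuous_potential strictAnti_exp_neg.antitone (fun _ => (exp_pos _).le)
    (by fun_prop) hfin).exists_forall_ge' 0 ?_
  exact ((tendsto_potential_exp_neg_cocompact hfin).eventually_lt_const
    (potential_exp_neg_pos hfin hA0 0)).mono fun _ => le_of_lt

variable {H : HalfSpace E} {a b : E}

lemma IsCenter.opp_polarizes (ha : IsCenter A a) (hA : MeasurableSet A) (hfin : volume A ≠ ⊤)
    (h : H.Polarizes A) (hheight : H.height a < 0) : H.opp.Polarizes A := by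
  refine h.opp_of_potential_le strictAnti_exp_neg (fun _ => (exp_pos _).le) hA hfin
    (x := H.reflect a) (by rw [H.height_reflect]; linarith) ?_
  rw [H.reflect_reflect]
  exact ha _

lemma IsCenter.polarizes (ha : IsCenter A a) (hA : MeasurableSet A) (hfin : volume A ≠ ⊤)
    (h : H.opp.Polarizes A) (hheight : 0 < H.height a) : H.Polarizes A := by
  simpa only [H.opp_opp] using
    ha.opp_polarizes hA hfin h (by rwa [H.height_opp, neg_lt_zero])

lemma IsCenter.reflect (ha : IsCenter A a) (hA : MeasurableSet A) (hfin : volume A ≠ ⊤)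
    (h : H.Polarizes A) (hopp : H.opp.Polarizes A) : IsCenter A (H.reflect a) := fun x => by
  rw [h.potential_reflect hopp strictAnti_exp_neg.antitone (fun _ => (exp_pos _).le) hA hfin]
  exact ha x

lemma HalfSpace.Polarizes.offset_eq {H' : HalfSpace E} (hA : MeasurableSet A)
    (hfin : volume A ≠ ⊤) (hA0 : volume A ≠ 0) (hnormal : H.normal = H'.normal)
    (h : H.Polarizes A) (hopp : H.opp.Polarizes A) (h' : H'.Polarizes A)
    (hopp' : H'.opp.Polarizes A) : H.offset = H'.offset :=
  HalfSpace.eq_offset_of_comp_reflect_eq (tendsto_potential_exp_neg_cocompact hfin)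
    (potential_exp_neg_pos hfin hA0 0).ne' hnormal
    (h.potential_reflect hopp strictAnti_exp_neg.antitone (fun _ => (exp_pos _).le) hA hfin)
    (h'.potential_reflect hopp' strictAnti_exp_neg.antitone (fun _ => (exp_pos _).le) hA hfin)

lemma Compatible.isCenter_unique (h : Compatible A B) (hA : MeasurableSet A)
    (hAfin : volume A ≠ ⊤) (hA0 : volume A ≠ 0) (hB : MeasurableSet B) (hBfin : volume B ≠ ⊤)
    (hB0 : volume B ≠ 0) (ha : IsCenter A a) (hb : IsCenter B b) : a = b := by
  by_contra hne
  obtain ⟨H, rfl, hpos⟩ := HalfSpace.exists_reflect_eq hne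
  let P (s : ℝ) : HalfSpace E := ⟨H.normal, s, H.norm_normal⟩
  let symmetricOffsets (C : Set E) : Set ℝ := {s | (P s).Polarizes C ∧ (P s).opp.Polarizes C}
  have hsubsingleton {C : Set E} (hC : MeasurableSet C) (hCfin : volume C ≠ ⊤)
      (hC0 : volume C ≠ 0) : (symmetricOffsets C).Subsingleton := fun s hs t ht =>
    HalfSpace.Polarizes.offset_eq (H := P s) (H' := P t) hC hCfin hC0 rfl hs.1 hs.2 ht.1 ht.2
  have hseparating : Ioo ⟪H.normal, H.reflect a⟫_ℝ ⟪H.normal, a⟫_ℝ ⊆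
      symmetricOffsets A ∪ symmetricOffsets B := by
    rintro s ⟨hsb, hsa⟩
    rcases (h.symm (P s)).symm with hPA | hPB
    · exact .inl ⟨ha.polarizes hA hAfin hPA (sub_pos.2 hsa), hPA⟩
    · exact .inr ⟨hPB, hb.opp_polarizes hB hBfin hPB (sub_neg.2 hsb)⟩
  have hlt : ⟪H.normal, H.reflect a⟫_ℝ < ⟪H.normal, a⟫_ℝ := by
    have hreflect := H.height_reflect a
    simp only [HalfSpace.height] at hreflect hpos
    linarith
  exact Ioo_infinite hlt (((hsubsingleton hA hAfin hA0).finite.union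
    (hsubsingleton hB hBfin hB0).finite).subset hseparating)

lemma Compatible.polarizes (h : Compatible A B) (hA : MeasurableSet A) (hAfin : volume A ≠ ⊤)
    (hB : MeasurableSet B) (hBfin : volume B ≠ ⊤) (hB0 : volume B ≠ 0) (hb : IsCenter B b)
    (hheight : 0 < H.height b) : H.Polarizes A := by
  by_contra hnot
  have hA0 : volume A ≠ 0 := fun hA0 =>
    hnot ((measure_eq_zero_iff_ae_notMem.1 hA0).mono fun _ hy hmem => absurd hmem hy)
  have hopp := (h H).resolve_left hnot
  have hb' := hb.reflect hB hBfin (hb.polarizes hB hBfin hopp hheight) hopp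
  obtain ⟨a, ha⟩ := exists_isCenter hAfin hA0
  have hfixed : H.reflect b = b :=
    (h.isCenter_unique hA hAfin hA0 hB hBfin hB0 ha hb').symm.trans
      (h.isCenter_unique hA hAfin hA0 hB hBfin hB0 ha hb)
  have hreflect := H.height_reflect b
  rw [hfixed] at hreflect
  linarith

end Potential

section Equality

variable {E : Type*} [NormedAddCommGroup E] [InnerProductSpace ℝ E] [FiniteDimensional ℝ E]
  [MeasurableSpace E] [BorelSpace E] {A : Set E} {a : E}

lemma volume_inter_closedBall_le_of_polarizes (hA : MeasurableSet A) (hfin : volume A ≠ ⊤)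
    (h : ∀ H : HalfSpace E, 0 < H.height a → H.Polarizes A) {x y : E} (hxy : ‖x - a‖ < ‖y - a‖)
    (r : ℝ) : volume (A ∩ Metric.closedBall y r) ≤ volume (A ∩ Metric.closedBall x r) := by
  have hanti : Antitone ((Iic r).indicator (1 : ℝ → ℝ)) := fun s t hst => by
    by_cases ht : t ∈ Iic r
    · rw [indicator_of_mem ht, indicator_of_mem (mem_Iic.2 (hst.trans ht)), Pi.one_apply,
        Pi.one_apply]
    · rw [indicator_of_notMem ht]
      exact indicator_nonneg (fun _ _ => zero_le_one) s
  have hfinite (z : E) : volume (A ∩ Metric.closedBall z r) ≠ ⊤ :=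
    measure_ne_top_of_subset inter_subset_left hfin
  rw [← ENNReal.toReal_le_toReal (hfinite y) (hfinite x)]
  have hle := HalfSpace.le_of_norm_sub_lt_of_reflect_le
    (w := potential ((Iic r).indicator 1) A) (fun H hH z hz =>
    (h H hH).potential_reflect_le hanti (fun t => indicator_nonneg (fun _ _ => zero_le_one) t)
      hA hfin hz.le) hxy
  simpa only [potential_indicator_Iic, Measure.real] using hle

lemma ae_norm_sub_le_of_polarizes (hA : MeasurableSet A) (hfin : volume A ≠ ⊤)
    (h : ∀ H : HalfSpace E, 0 < H.height a → H.Polarizes A) :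
    ∃ N : Set E, volume N = 0 ∧ ∀ x ∉ N, ∀ y ∉ N, x ∉ A → y ∈ A → ‖y - a‖ ≤ ‖x - a‖ := by
  refine ⟨_, Besicovitch.ae_tendsto_measure_inter_div_of_measurableSet volume hA,
    fun x hx y hy hxA hyA => ?_⟩
  rw [notMem_compl_iff, mem_ofPred_eq] at hx hy
  rw [indicator_of_mem hyA] at hy
  rw [indicator_of_notMem hxA] at hx
  by_contra! hlt
  refine one_ne_zero (le_zero_iff.1 (le_of_tendsto_of_tendsto' hy hx fun r => ?_))
  rw [Measure.addHaar_closedBall_center, Measure.addHaar_closedBall_center volume x]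
  exact ENNReal.div_le_div_right (volume_inter_closedBall_le_of_polarizes hA hfin h hlt r) _

lemma HalfSpace.polarizes_or_opp_polarizes {u v : E → ℝ} (H : HalfSpace E)
    (h : ∀ᵐ p : E × E ∂(volume.prod volume), 0 ≤ (H.height p.1 * H.height p.2) *
      ((u p.1 - u (H.reflect p.1)) * (v p.2 - v (H.reflect p.2)))) (s t : ℝ) :
    H.Polarizes {x | s < u x} ∨ H.opp.Polarizes {y | t < v y} := by
  simp only [HalfSpace.Polarizes, ae_iff]
  rw [← mul_eq_zero, ← Measure.prod_prod]
  refine measure_mono_null ?_ h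
  rintro ⟨x, y⟩ ⟨hx, hy⟩
  simp only [mem_ofPred_eq, Classical.not_imp, not_lt, not_le, H.reflect_opp, H.height_opp,
    neg_lt_zero] at hx hy
  obtain ⟨hsx, hxs, hxheight⟩ := hx
  obtain ⟨hty, hyt, hyheight⟩ := hy
  exact not_le.2 (mul_neg_of_neg_of_pos (mul_neg_of_neg_of_pos hxheight hyheight)
    (mul_pos (sub_pos.2 (hxs.trans_lt hsx)) (sub_pos.2 (hyt.trans_lt hty))))

variable [Nontrivial E]

lemma ae_eq_ball_of_polarizes (hA : MeasurableSet A) (hfin : volume A ≠ ⊤)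
    (h : ∀ H : HalfSpace E, 0 < H.height a → H.Polarizes A) {ρ : ℝ} (hρ : 0 ≤ ρ)
    (hvol : volume (Metric.ball a ρ) = volume A) : A =ᵐ[volume] Metric.ball a ρ := by
  obtain ⟨N, hN, hNA⟩ := ae_norm_sub_le_of_polarizes hA hfin h
  have hsub (y : E) (hyA : y ∈ A) (hyN : y ∉ N) : ‖y - a‖ ≤ ρ := by
    by_contra! hlt
    have hball : Metric.ball a ‖y - a‖ \ N ⊆ A := fun x hx => by
      by_contra hxA
      exact (mem_ball_iff_norm.1 hx.1).not_ge (hNA x hx.2 y hyN hxA hyA)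
    have hle := measure_mono (μ := volume) hball
    rw [measure_sdiff_null hN, ← hvol] at hle
    exact hle.not_gt ((volume_ball_lt_volume_ball_iff a a hρ (norm_nonneg _)).2 hlt)
  have hle : A ≤ᵐ[volume] Metric.ball a ρ := by
    filter_upwards [measure_eq_zero_iff_ae_notMem.1 hN,
      measure_eq_zero_iff_ae_notMem.1 (Measure.addHaar_sphere volume a ρ)] with x hxN hx hxA
    exact mem_ball_iff_norm.2 ((hsub x hxA hxN).lt_of_ne fun heq =>
      hx (mem_sphere_iff_norm.2 heq))
  exact ae_eq_of_ae_subset_of_measure_ge hle hvol.le hA.nullMeasurableSet measure_ball_lt_top.ne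

end Equality

section SchwarzEquality

lemma exists_volume_lt_ne_zero {α : Type*} [MeasureSpace α] {u : α → ℝ} (hu : ∀ x, 0 ≤ u x)
    (h : ¬ ∀ᵐ x, u x = 0) : ∃ t, 0 < t ∧ volume {x | t < u x} ≠ 0 := by
  by_contra! hzero
  obtain ⟨t, -, htpos, htlim⟩ := exists_seq_strictAnti_tendsto (0 : ℝ)
  refine h ?_
  filter_upwards [ae_all_iff.2 fun k => measure_eq_zero_iff_ae_notMem.1 (hzero (t k) (htpos k))]
    with x hx
  exact le_antisymm (ge_of_tendsto' htlim fun k => not_lt.1 (hx k)) (hu x)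

variable {n : ℕ} [NeZero n] {u v : EuclideanSpace ℝ (Fin n) → ℝ}
  {J : ℝ → ℝ} {g : EuclideanSpace ℝ (Fin n) → ℝ}

lemma IsRearrangeable.ae_eq_schwarzRearr_sub_of_ae_eq_ball (hu : IsRearrangeable u)
    {a : EuclideanSpace ℝ (Fin n)}
    (h : ∀ t, 0 < t → {x | t < u x} =ᵐ[volume]
      Metric.ball a (schwarzRadius n {x | t < u x})) :
    ∀ᵐ x, u x = schwarzRearr n u (x - a) := by
  have hrat : ∀ᵐ x, ∀ q : ℚ, 0 < (q : ℝ) →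
      ((q : ℝ) < u x ↔ x ∈ Metric.ball a (schwarzRadius n {x | (q : ℝ) < u x})) := by
    refine ae_all_iff.2 fun q => ?_
    by_cases hq : 0 < (q : ℝ)
    · exact (h q hq).mem_iff.mono fun x hx _ => hx
    · exact Eventually.of_forall fun x hq' => absurd hq' hq
  filter_upwards [hrat, Measure.ae_ne volume a] with x hx hxa
  refine eq_of_forall_pos_rat_lt_iff (hu.nonneg x) (schwarzRearr_nonneg u _) fun q hq => ?_
  rw [hx q hq, lt_schwarzRearr_iff hu (sub_ne_zero.2 hxa) hq, mem_ball_iff_norm,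
    lt_schwarzRadius_iff (hu.volume_lt_top q hq).ne 0 (norm_nonneg _)]

lemma compatible_of_energy_schwarzRearr_eq (hJ : IsConvexCost J)
    (hJs : StrictConvexOn ℝ univ J) (hg : IsRadialKernel g)
    (hgs : ∀ x y, x ≠ 0 → ‖x‖ < ‖y‖ → g y < g x) (hu : IsRearrangeable u)
    (hv : IsRearrangeable v) (hfin : energy J g u v ≠ ⊤)
    (heq : energy J g (schwarzRearr n u) (schwarzRearr n v) = energy J g u v) (s t : ℝ) :
    Compatible {x | s < u x} {y | t < v y} := fun H => by
  have hpol {w : EuclideanSpace ℝ (Fin n) → ℝ} (hw : IsRearrangeable w) :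
      IsRearrangeable (H.polarize w) ∧ schwarzRearr n (H.polarize w) = schwarzRearr n w :=
    have hequi := H.equimeasurable_polarize hw.measurable
    have hnonneg := H.polarize_nonneg hw.nonneg
    ⟨hw.of_equimeasurable (H.measurable_polarize hw.measurable) hnonneg hequi,
      schwarzRearr_congr hnonneg hw.nonneg hequi⟩
  refine H.polarizes_or_opp_polarizes (ae_nonneg_of_energy_le_polarize hJ hJs hg hgs H
    hu.measurable hv.measurable hfin ?_) s t
  calc energy J g u v = energy J g (schwarzRearr n u) (schwarzRearr n v) := heq.symm
    _ = energy J g (schwarzRearr n (H.polarize u)) (schwarzRearr n (H.polarize v)) := by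
      rw [(hpol hu).2, (hpol hv).2]
    _ ≤ energy J g (H.polarize u) (H.polarize v) :=
      energy_schwarzRearr_le hJ hg (hpol hu).1 (hpol hv).1

lemma IsRearrangeable.ae_eq_schwarzRearr_sub (hu : IsRearrangeable u)
    {B : Set (EuclideanSpace ℝ (Fin n))} (hB : MeasurableSet B) (hBfin : volume B ≠ ⊤)
    (hB0 : volume B ≠ 0) (h : ∀ t, Compatible {x | t < u x} B) {b : EuclideanSpace ℝ (Fin n)}
    (hb : IsCenter B b) : ∀ᵐ x, u x = schwarzRearr n u (x - b) := by
  refine hu.ae_eq_schwarzRearr_sub_of_ae_eq_ball fun t ht => ?_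
  have hmeas := measurableSet_lt (measurable_const (a := t)) hu.measurable
  have hfin := (hu.volume_lt_top t ht).ne
  exact ae_eq_ball_of_polarizes hmeas hfin
    (fun _ hH => (h t).polarizes hmeas hfin hB hBfin hB0 hb hH) (schwarzRadius_nonneg _)
    (volume_ball_schwarzRadius b hfin)

theorem exists_ae_eq_schwarzRearr_sub (hu : IsRearrangeable u) (hv : IsRearrangeable v)
    (h : ∀ s t, Compatible {x | s < u x} {y | t < v y}) (hu0 : ¬ ∀ᵐ x, u x = 0)
    (hv0 : ¬ ∀ᵐ y, v y = 0) :
    ∃ a, (∀ᵐ x, u x = schwarzRearr n u (x - a)) ∧ ∀ᵐ y, v y = schwarzRearr n v (y - a) := by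
  obtain ⟨s, hs, hs0⟩ := exists_volume_lt_ne_zero hu.nonneg hu0
  obtain ⟨t, ht, ht0⟩ := exists_volume_lt_ne_zero hv.nonneg hv0
  have hA := measurableSet_lt (measurable_const (a := s)) hu.measurable
  have hB := measurableSet_lt (measurable_const (a := t)) hv.measurable
  have hAfin := (hu.volume_lt_top s hs).ne
  have hBfin := (hv.volume_lt_top t ht).ne
  obtain ⟨a, ha⟩ := exists_isCenter hAfin hs0
  obtain ⟨b, hb⟩ := exists_isCenter hBfin ht0
  obtain rfl := (h s t).isCenter_unique hA hAfin hs0 hB hBfin ht0 ha hb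
  exact ⟨a, hu.ae_eq_schwarzRearr_sub hB hBfin ht0 (fun τ => h τ t) hb,
    hv.ae_eq_schwarzRearr_sub hA hAfin hs0 (fun τ => (h s τ).symm) ha⟩

end SchwarzEquality

section Equimeasurable

variable {α : Type*} [MeasureSpace α] {u w : α → ℝ}

lemma Equimeasurable.map_restrict_Ioi (h : Equimeasurable u w) (hu : IsRearrangeable u)
    (hw : Measurable w) :
    (volume.map u).restrict (Ioi 0) = (volume.map w).restrict (Ioi 0) := by
  obtain ⟨t, -, htpos, htlim⟩ := exists_seq_strictAnti_tendsto (0 : ℝ)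
  have hgen : (⋃ k, Ioi (t k)) = Ioi 0 :=
    IsGLB.iUnion_Ioi_eq ⟨forall_mem_range.2 fun k => (htpos k).le,
      fun s hs => ge_of_tendsto' htlim fun k => hs (mem_range_self k)⟩
  have hIoi (s : ℝ) (hs : 0 < s) : volume.map u (Ioi s) = volume.map w (Ioi s) := by
    rw [Measure.map_apply hu.measurable measurableSet_Ioi, Measure.map_apply hw measurableSet_Ioi]
    exact h s hs
  rw [← hgen, Measure.restrict_iUnion_congr]
  intro k
  have : IsFiniteMeasure ((volume.map u).restrict (Ioi (t k))) := ⟨by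
    rw [Measure.restrict_apply_univ, Measure.map_apply hu.measurable measurableSet_Ioi]
    exact hu.volume_lt_top _ (htpos k)⟩
  refine ext_of_generate_finite _ (borel_eq_generateFrom_Ioi ℝ ▸ BorelSpace.measurable_eq)
    isPiSystem_Ioi ?_ ?_
  · rintro _ ⟨s, rfl⟩
    rw [Measure.restrict_apply measurableSet_Ioi, Measure.restrict_apply measurableSet_Ioi,
      Ioi_inter_Ioi]
    exact hIoi _ (lt_sup_of_lt_right (htpos k))
  · rw [Measure.restrict_apply_univ, Measure.restrict_apply_univ, hIoi _ (htpos k)]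

lemma lintegral_comp_eq_setLIntegral_map {F : ℝ → ℝ≥0∞} (hF : Measurable F) (hF0 : F 0 = 0)
    (hu : Measurable u) (hu0 : ∀ x, 0 ≤ u x) :
    ∫⁻ x, F (u x) = ∫⁻ s in Ioi 0, F s ∂volume.map u := by
  rw [setLIntegral_map measurableSet_Ioi hF hu]
  refine (setLIntegral_eq_of_support_subset fun x hx => ?_).symm
  exact (hu0 x).lt_of_ne fun h => hx (h ▸ hF0 : F (u x) = 0)

lemma Equimeasurable.lintegral_comp_eq (h : Equimeasurable u w) (hu : IsRearrangeable u)
    (hw : IsRearrangeable w) {F : ℝ → ℝ≥0∞} (hF : Measurable F) (hF0 : F 0 = 0) :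
    ∫⁻ x, F (u x) = ∫⁻ x, F (w x) := by
  rw [lintegral_comp_eq_setLIntegral_map hF hF0 hu.measurable hu.nonneg,
    lintegral_comp_eq_setLIntegral_map hF hF0 hw.measurable hw.nonneg,
    h.map_restrict_Ioi hu hw.measurable]

lemma Equimeasurable.ae_eq_zero (h : Equimeasurable u w) (hu : ∀ x, 0 ≤ u x)
    (hw : ∀ᵐ x, w x = 0) : ∀ᵐ x, u x = 0 := by
  by_contra hne
  obtain ⟨t, ht, hpos⟩ := exists_volume_lt_ne_zero hu hne
  refine hpos ((h t ht).trans (measure_eq_zero_iff_ae_notMem.2 ?_))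
  filter_upwards [hw] with x hx
  simp only [hx, ht.not_gt, not_false_eq_true]

end Equimeasurable

section EnergyIdentities

variable {E : Type*} [NormedAddCommGroup E] [MeasurableSpace E] {J g₀ : ℝ → ℝ} {g u v w z : E → ℝ}

lemma isRadialKernel_comp_norm [OpensMeasurableSpace E] (hg₀ : AntitoneOn g₀ (Ioi 0))
    (h : ∀ x : E, 0 ≤ g₀ ‖x‖) : IsRadialKernel fun x : E => g₀ ‖x‖ where
  nonneg := h
  measurable := by
    refine measurable_of_measurable_on_compl_singleton 0 ?_
    have hanti : Antitone fun r : Ioi (0 : ℝ) => g₀ r := fun a b hab => hg₀ a.2 b.2 hab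
    have hnorm : Measurable fun x : {x : E | x ≠ 0} =>
        (⟨‖x.1‖, norm_pos_iff.2 x.2⟩ : Ioi (0 : ℝ)) := Measurable.subtype_mk (by fun_prop)
    exact hanti.measurable.comp hnorm
  le_of_norm_le _ _ hx hxy := hg₀ (norm_pos_iff.2 hx) ((norm_pos_iff.2 hx).trans_le hxy) hxy

variable [InnerProductSpace ℝ E] [FiniteDimensional ℝ E] [BorelSpace E]

lemma energy_zero_left (hJ : IsConvexCost J) (hg : Measurable g) (hv : Measurable v) :
    energy J g 0 v = (∫⁻ y, ENNReal.ofReal (J (-v y))) * ∫⁻ x, ENNReal.ofReal (g x) := by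
  have hJm := hJ.continuous.measurable
  simp only [energy, ENNReal.ofReal_mul (hJ.nonneg _), Pi.zero_apply, zero_sub]
  exact lintegral_lintegral_mul_sub' (f := fun y => ENNReal.ofReal (J (-v y)))
    (h := fun x => ENNReal.ofReal (g x)) (by fun_prop) (by fun_prop)

lemma energy_zero_right (hJ : IsConvexCost J) (hg : Measurable g) (hu : Measurable u) :
    energy J g u 0 = (∫⁻ x, ENNReal.ofReal (J (u x))) * ∫⁻ x, ENNReal.ofReal (g x) := by
  have hJm := hJ.continuous.measurable
  simp only [energy, ENNReal.ofReal_mul (hJ.nonneg _), Pi.zero_apply, sub_zero]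
  exact lintegral_lintegral_mul_sub (f := fun x => ENNReal.ofReal (J (u x)))
    (h := fun x => ENNReal.ofReal (g x)) (by fun_prop) (by fun_prop)

lemma energy_eq_of_ae_eq_zero_left (hJ : IsConvexCost J) (hg : Measurable g) (hu : ∀ x, 0 ≤ u x)
    (huw : Equimeasurable u w) (hv : IsRearrangeable v) (hz : IsRearrangeable z)
    (hvz : Equimeasurable v z) (hw : ∀ᵐ x, w x = 0) : energy J g u v = energy J g w z := by
  rw [energy_congr_ae (u' := 0) (huw.ae_eq_zero hu hw) (ae_eq_refl v),
    energy_congr_ae (u' := 0) hw (ae_eq_refl z), energy_zero_left hJ hg hv.measurable,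
    energy_zero_left hJ hg hz.measurable, hvz.lintegral_comp_eq hv hz
      (F := fun t => ENNReal.ofReal (J (-t))) (by have := hJ.continuous; fun_prop)
      (by rw [neg_zero, hJ.map_zero, ENNReal.ofReal_zero])]

lemma energy_eq_of_ae_eq_zero_right (hJ : IsConvexCost J) (hg : Measurable g)
    (hu : IsRearrangeable u) (hw : IsRearrangeable w) (huw : Equimeasurable u w)
    (hv : ∀ y, 0 ≤ v y) (hvz : Equimeasurable v z) (hz : ∀ᵐ y, z y = 0) :
    energy J g u v = energy J g w z := by
  rw [energy_congr_ae (v' := 0) (ae_eq_refl u) (hvz.ae_eq_zero hv hz),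
    energy_congr_ae (v' := 0) (ae_eq_refl w) hz, energy_zero_right hJ hg hu.measurable,
    energy_zero_right hJ hg hw.measurable, huw.lintegral_comp_eq hu hw
      (F := fun t => ENNReal.ofReal (J t)) (by have := hJ.continuous; fun_prop)
      (by rw [hJ.map_zero, ENNReal.ofReal_zero])]

lemma energy_comp_sub (J : ℝ → ℝ) (g u v : E → ℝ) (a : E) :
    energy J g (fun x => u (x - a)) (fun y => v (y - a)) = energy J g u v := by
  unfold energy
  rw [← lintegral_sub_right_eq_self (fun x => ∫⁻ y, ENNReal.ofReal (J (u x - v y) * g (x - y))) a]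
  refine lintegral_congr fun x => ?_
  rw [← lintegral_sub_right_eq_self (fun y => ENNReal.ofReal (J (u (x - a) - v y) * g (x - a - y)))
    a]
  simp only [sub_sub_sub_cancel_right]

end EnergyIdentities

end Rearrangement

open Rearrangement in
theorem stmt_1_general (n : ℕ) (hn : 1 ≤ n)
    (J : ℝ → ℝ) (hJnonneg : ∀ t, 0 ≤ J t) (hJconv : StrictConvexOn ℝ Set.univ J) (hJ0 : J 0 = 0)
    (g : EuclideanSpace ℝ (Fin n) → ℝ) (hgnonneg : ∀ x, 0 ≤ g x)
    (g₀ : ℝ → ℝ) (hg₀ : StrictAntiOn g₀ (Set.Ioi 0)) (hgrad : ∀ x, g x = g₀ ‖x‖)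
    (u v : EuclideanSpace ℝ (Fin n) → ℝ) (hu : Measurable u) (hv : Measurable v)
    (hu0 : ∀ x, 0 ≤ u x) (hv0 : ∀ x, 0 ≤ v x)
    (huτ : ∀ τ : ℝ, 0 < τ → volume {x | τ < u x} < ⊤)
    (hvτ : ∀ τ : ℝ, 0 < τ → volume {x | τ < v x} < ⊤)
    (hfin : (∫⁻ x : EuclideanSpace ℝ (Fin n), ∫⁻ y : EuclideanSpace ℝ (Fin n),
        ENNReal.ofReal (J (u x - v y) * g (x - y))) ≠ ⊤) :
    ((∫⁻ x : EuclideanSpace ℝ (Fin n), ∫⁻ y : EuclideanSpace ℝ (Fin n),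
        ENNReal.ofReal (J (schwarzRearr n u x - schwarzRearr n v y) * g (x - y))) =
      ∫⁻ x : EuclideanSpace ℝ (Fin n), ∫⁻ y : EuclideanSpace ℝ (Fin n),
        ENNReal.ofReal (J (u x - v y) * g (x - y))) ↔
      ((∀ᵐ x ∂(volume : Measure (EuclideanSpace ℝ (Fin n))), u x = 0) ∨
        (∀ᵐ y ∂(volume : Measure (EuclideanSpace ℝ (Fin n))), v y = 0) ∨
        ∃ a : EuclideanSpace ℝ (Fin n),
          (∀ᵐ x ∂(volume : Measure (EuclideanSpace ℝ (Fin n))),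
            u x = schwarzRearr n u (x - a)) ∧
          (∀ᵐ y ∂(volume : Measure (EuclideanSpace ℝ (Fin n))),
            v y = schwarzRearr n v (y - a))) := by
  have : NeZero n := ⟨by omega⟩
  obtain rfl : g = fun x => g₀ ‖x‖ := funext hgrad
  have hJ : IsConvexCost J := ⟨hJconv.convexOn, hJnonneg, hJ0⟩
  have hg := isRadialKernel_comp_norm hg₀.antitoneOn hgnonneg
  have hgs (x y : EuclideanSpace ℝ (Fin n)) (hx : x ≠ 0) (hxy : ‖x‖ < ‖y‖) : g₀ ‖y‖ < g₀ ‖x‖ :=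
    hg₀ (norm_pos_iff.2 hx) ((norm_pos_iff.2 hx).trans hxy) hxy
  have hu : IsRearrangeable u := ⟨hu, hu0, huτ⟩
  have hv : IsRearrangeable v := ⟨hv, hv0, hvτ⟩
  constructor
  · intro heq
    refine or_iff_not_imp_left.2 fun hu_ne => or_iff_not_imp_left.2 fun hv_ne => ?_
    exact exists_ae_eq_schwarzRearr_sub hu hv
      (compatible_of_energy_schwarzRearr_eq hJ hJconv hg hgs hu hv hfin heq) hu_ne hv_ne
  · rintro (hu_zero | hv_zero | ⟨a, hua, hva⟩)
    · exact energy_eq_of_ae_eq_zero_left hJ hg.measurable (schwarzRearr_nonneg u)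
        (equimeasurable_schwarzRearr hu) (isRearrangeable_schwarzRearr hv) hv
        (equimeasurable_schwarzRearr hv) hu_zero
    · exact energy_eq_of_ae_eq_zero_right hJ hg.measurable (isRearrangeable_schwarzRearr hu) hu
        (equimeasurable_schwarzRearr hu) (schwarzRearr_nonneg v)
        (equimeasurable_schwarzRearr hv) hv_zero
    · exact (energy_comp_sub J (g₀ ‖·‖) _ _ a).symm.trans (energy_congr_ae hua hva).symm

theorem stmt_1 (n : ℕ) (hn : 1 ≤ n)
    (J : ℝ → ℝ) (hJnonneg : ∀ t, 0 ≤ J t) (hJconv : StrictConvexOn ℝ Set.univ J) (hJ0 : J 0 = 0)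
    (g : EuclideanSpace ℝ (Fin n) → ℝ) (hgint : Integrable g) (hgnonneg : ∀ x, 0 ≤ g x)
    (g₀ : ℝ → ℝ) (hg₀ : StrictAntiOn g₀ (Set.Ioi 0)) (hgrad : ∀ x, g x = g₀ ‖x‖)
    (u v : EuclideanSpace ℝ (Fin n) → ℝ) (hu : Measurable u) (hv : Measurable v)
    (hu0 : ∀ x, 0 ≤ u x) (hv0 : ∀ x, 0 ≤ v x)
    (huτ : ∀ τ : ℝ, 0 < τ → volume {x | τ < u x} < ⊤)
    (hvτ : ∀ τ : ℝ, 0 < τ → volume {x | τ < v x} < ⊤)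
    (hfin : (∫⁻ x : EuclideanSpace ℝ (Fin n), ∫⁻ y : EuclideanSpace ℝ (Fin n),
        ENNReal.ofReal (J (u x - v y) * g (x - y))) ≠ ⊤) :
    ((∫⁻ x : EuclideanSpace ℝ (Fin n), ∫⁻ y : EuclideanSpace ℝ (Fin n),
        ENNReal.ofReal (J (schwarzRearr n u x - schwarzRearr n v y) * g (x - y))) =
      ∫⁻ x : EuclideanSpace ℝ (Fin n), ∫⁻ y : EuclideanSpace ℝ (Fin n),
        ENNReal.ofReal (J (u x - v y) * g (x - y))) ↔
      ((∀ᵐ x ∂(volume : Measure (EuclideanSpace ℝ (Fin n))), u x = 0) ∨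
        (∀ᵐ y ∂(volume : Measure (EuclideanSpace ℝ (Fin n))), v y = 0) ∨
        ∃ a : EuclideanSpace ℝ (Fin n),
          (∀ᵐ x ∂(volume : Measure (EuclideanSpace ℝ (Fin n))),
            u x = schwarzRearr n u (x - a)) ∧
          (∀ᵐ y ∂(volume : Measure (EuclideanSpace ℝ (Fin n))),
            v y = schwarzRearr n v (y - a))) :=
  stmt_1_general n hn J hJnonneg hJconv hJ0 g hgnonneg g₀ hg₀ hgrad u v hu hv hu0 hv0 huτ hvτ hfin
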